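/- arXiv:2103.16186 — 2 statements merged into one kernel-verified Lean document; each statement's English description precedes it below -/
import Mathlib

section
/- Fix 1 ≤ p ≤ ∞ and integers d ≥ 4 and 3 ≤ k ≤ d. Then H^p(𝕋^d) enjoys the contractive restriction property of dimension k if and only if p is not an even integer (i.e., p ∉ {2, 4, 6, ...}; in particular the property holds for p = ∞). -/
open MeasureTheory
open scoped Classical ENNReal

noncomputable section

/-- The `d`-dimensional torus, modelled as `d` copies of `ℝ/ℤ`,
whose product `volume` measure is the normalized Haar measure. -/
abbrev Torus (d : ℕ) := Fin d → AddCircle (1 : ℝ)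

/-- The character `z ↦ z^α` on the torus. -/
def torusChar {d : ℕ} (α : Fin d → ℤ) (x : Torus d) : ℂ :=
  ∏ j, fourier (α j) (x j)

/-- The trigonometric polynomial with frequencies in `F` and coefficients `a`. -/
def trigPoly {d : ℕ} (F : Finset (Fin d → ℤ)) (a : (Fin d → ℤ) → ℂ) (x : Torus d) : ℂ :=
  ∑ α ∈ F, a α * torusChar α x

/-- The set `ℕ₀^d` of multi-indices with nonnegative entries. -/
def NN (d : ℕ) : Set (Fin d → ℤ) := {α | ∀ j, 0 ≤ α j}

/-- `Λ` is a coset in `ℤ^d`, i.e. a translate of a subgroup. -/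
def IsCoset {d : ℕ} (Λ : Set (Fin d → ℤ)) : Prop :=
  ∃ (x : Fin d → ℤ) (H : AddSubgroup (Fin d → ℤ)),
    Λ = (x + ·) '' (H : Set (Fin d → ℤ))

/-- `Λ` is a contractive projection set for `L^p(𝕋^d)`:
the projection onto frequencies in `Λ` is contractive on trigonometric polynomials. -/
def IsContractiveLp (d : ℕ) (p : ℝ≥0∞) (Λ : Set (Fin d → ℤ)) : Prop :=
  ∀ (F : Finset (Fin d → ℤ)) (a : (Fin d → ℤ) → ℂ),
    eLpNorm (trigPoly (F.filter (· ∈ Λ)) a) p volume ≤ eLpNorm (trigPoly F a) p volume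

/-- `Γ` is a contractive projection set for `H^p(𝕋^d)`:
the projection onto frequencies in `Γ` is contractive on analytic polynomials. -/
def IsContractiveHp (d : ℕ) (p : ℝ≥0∞) (Γ : Set (Fin d → ℤ)) : Prop :=
  ∀ F : Finset (Fin d → ℤ), ↑F ⊆ NN d → ∀ a : (Fin d → ℤ) → ℂ,
    eLpNorm (trigPoly (F.filter (· ∈ Γ)) a) p volume ≤ eLpNorm (trigPoly F a) p volume

/-- `Γ` has dimension `k`: the subgroup generated by the differences `γ - γ₀` has rank `k`. -/
def HasDim {d : ℕ} (Γ : Set (Fin d → ℤ)) (k : ℕ) : Prop :=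
  ∀ γ₀ ∈ Γ, Module.finrank ℤ (Submodule.span ℤ ((· - γ₀) '' Γ)) = k

/-- `H^p(𝕋^d)` enjoys the contractive restriction property of dimension `k`:
every `k`-dimensional contractive projection set for `H^p(𝕋^d)` is the restriction
of a coset in `ℤ^d` to `ℕ₀^d`. -/
def ContractiveRestrictionProperty (d : ℕ) (p : ℝ≥0∞) (k : ℕ) : Prop :=
  ∀ Γ : Set (Fin d → ℤ), Γ.Nonempty → Γ ⊆ NN d → HasDim Γ k → IsContractiveHp d p Γ →
    ∃ Λ : Set (Fin d → ℤ), IsCoset Λ ∧ Γ = Λ ∩ NN d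

/-- The coset `Λ(Γ)` in `ℤ^d` generated by `Γ`. -/
def cosetGen {d : ℕ} (Γ : Set (Fin d → ℤ)) : Set (Fin d → ℤ) :=
  ⋃ γ₀ ∈ Γ, (γ₀ + ·) '' (AddSubgroup.closure ((· - γ₀) '' Γ) : Set (Fin d → ℤ))

/-- The `n`-extension `E_n(Γ)`: all points of `Λ(Γ) ∩ ℕ₀^d` at distance at most `n` from `Γ`. -/
def Eext {d : ℕ} (n : ℕ) (Γ : Set (Fin d → ℤ)) : Set (Fin d → ℤ) :=
  {lam | lam ∈ cosetGen Γ ∩ NN d ∧ ∃ γ ∈ Γ, ∃ m : (Fin d → ℤ) →₀ ℤ,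
    (↑m.support : Set (Fin d → ℤ)) ⊆ Γ \ {γ} ∧
    lam = γ + ∑ α ∈ m.support, m α • (α - γ) ∧
    (∑ α ∈ m.support, max (m α) 0) ≤ (n : ℤ) ∧
    (∑ α ∈ m.support, max (-(m α)) 0) ≤ (n : ℤ)}

/-- Iterated `n`-extensions `E_n^k(Γ)`. -/
def EextIter {d : ℕ} (n : ℕ) : ℕ → Set (Fin d → ℤ) → Set (Fin d → ℤ)
  | 0, Γ => Eext n Γ
  | (k + 1), Γ => Eext n (EextIter n k Γ)

/-- The `n`-completion `E_n^∞(Γ)`. -/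
def EextInf {d : ℕ} (n : ℕ) (Γ : Set (Fin d → ℤ)) : Set (Fin d → ℤ) :=
  ⋃ k, EextIter n k Γ


section Chars

variable {ι : Type*} [Fintype ι]

/-- Characters on a general torus. -/
def tch (m : ι → ℤ) (x : ι → AddCircle (1 : ℝ)) : ℂ := ∏ j, fourier (m j) (x j)

lemma tch_continuous (m : ι → ℤ) : Continuous (tch m) := by
  unfold tch
  fun_prop

lemma tch_add_freq (m n : ι → ℤ) (x) : tch (m + n) x = tch m x * tch n x := by
  simp [tch, Finset.prod_mul_distrib]

lemma tch_neg (m : ι → ℤ) (x) : tch (-m) x = starRingEnd ℂ (tch m x) := by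
  simp [tch]

lemma tch_zero (x : ι → AddCircle (1 : ℝ)) : tch (0 : ι → ℤ) x = 1 := by
  simp [tch]

lemma tch_norm (m : ι → ℤ) (x) : ‖tch m x‖ = 1 := by
  simp only [tch, norm_prod]
  exact Finset.prod_eq_one fun j _ => by rw [fourier_apply]; exact Circle.norm_coe _

lemma tch_add (m : ι → ℤ) (x y) : tch m (x + y) = tch m x * tch m y := by
  simp [tch, fourier_apply, Finset.prod_mul_distrib, AddCircle.toCircle_add]

lemma tch_zero_right (m : ι → ℤ) : tch m 0 = 1 := by
  simp [tch]

lemma tch_zsmul (k : ℤ) (m : ι → ℤ) (x) : tch (k • m) x = (tch m x) ^ k := by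
  simp [tch, fourier_apply, mul_smul, AddCircle.toCircle_zsmul, Finset.prod_zpow]

instance : IsProbabilityMeasure (volume : Measure (AddCircle (1:ℝ))) :=
  ⟨by simp [AddCircle.measure_univ]⟩


lemma tch_integral_zero : ∫ x, tch (0 : ι → ℤ) x = 1 := by
  simp [tch_zero]

lemma tch_integral_ne {m : ι → ℤ} (hm : m ≠ 0) : ∫ x, tch m x = 0 := by
  obtain ⟨j, hj⟩ := Function.ne_iff.mp hm
  let y : ι → AddCircle (1:ℝ) := Pi.single j (((1 / 2 / (m j : ℝ)) : ℝ) : AddCircle (1:ℝ))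
  have hy : tch m y = -1 := by
    unfold tch
    rw [Finset.prod_eq_single j]
    · have := @fourier_add_half_inv_index 1 (m j) (by simpa using hj) one_pos 0
      simp only [y, Pi.single_eq_same]
      have h2 : (1 / 2 / (m j : ℝ)) = 1 / 2 / (m j:ℝ) := rfl
      simpa using this
    · intro b _ hb
      simp [y, Pi.single_eq_of_ne hb]
    · simp
  have h := integral_add_right_eq_self (μ := volume) (fun x => tch m x) y
  simp only [tch_add, hy] at h
  rw [integral_mul_const] at h
  have : (2:ℂ) * ∫ x, tch m x = 0 := by linear_combination -h
  simpa using this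

lemma torusChar_eq {d : ℕ} (α : Fin d → ℤ) : torusChar α = tch α := rfl

end Chars

section Core
variable {ι : Type*} [Fintype ι]

/-- sum of the coordinates -/
def ssum (x : ι → AddCircle (1 : ℝ)) : ℂ := ∑ i, tch (Pi.single i (1:ℤ)) x

lemma ssum_eq (x : ι → AddCircle (1 : ℝ)) : ssum x = ∑ i, fourier 1 (x i) := by
  unfold ssum
  refine Finset.sum_congr rfl fun i _ => ?_
  unfold tch
  rw [Finset.prod_eq_single i]
  · simp
  · intro b _ hb; simp [Pi.single_eq_of_ne hb]
  · simp

lemma ssum_continuous : Continuous (ssum (ι := ι)) := by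
  unfold ssum
  exact continuous_finsetSum _ fun i _ => tch_continuous _

lemma ssum_norm_le (x : ι → AddCircle (1 : ℝ)) : ‖ssum x‖ ≤ Fintype.card ι := by
  unfold ssum
  refine (norm_sum_le _ _).trans ?_
  simp [tch_norm]

/-- mixed moments -/
def tI (a b : ℕ) (n : ι → ℤ) : ℂ :=
  ∫ x, ssum x ^ a * (starRingEnd ℂ (ssum x)) ^ b * tch n x

lemma cont_integrable {E : Type*} [NormedAddCommGroup E] {f : (ι → AddCircle (1:ℝ)) → E} (hf : Continuous f) :
    Integrable f := by
  apply hf.integrable_of_hasCompactSupport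
  exact HasCompactSupport.of_compactSpace f

lemma tI_succ_left (a b : ℕ) (n : ι → ℤ) :
    tI (a+1) b n = ∑ i, tI a b (n + Pi.single i 1) := by
  unfold tI
  rw [← integral_finsetSum]
  · congr 1
    ext x
    simp only [tch_add_freq]
    rw [pow_succ]
    nth_rewrite 2 [ssum]
    simp only [Finset.mul_sum, Finset.sum_mul]
    refine Finset.sum_congr rfl fun i _ => ?_
    ring
  · intro i _
    apply cont_integrable
    have := ssum_continuous (ι := ι)
    have := tch_continuous (n + Pi.single i 1)
    fun_prop

lemma tI_succ_right (a b : ℕ) (n : ι → ℤ) :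
    tI a (b+1) n = ∑ i, tI a b (n - Pi.single i 1) := by
  unfold tI
  rw [← integral_finsetSum]
  · congr 1
    ext x
    simp only [sub_eq_add_neg, tch_add_freq, tch_neg]
    rw [pow_succ]
    nth_rewrite 3 [ssum]
    simp only [map_sum, Finset.mul_sum, Finset.sum_mul]
    refine Finset.sum_congr rfl fun i _ => ?_
    ring
  · intro i _
    apply cont_integrable
    have := ssum_continuous (ι := ι)
    have := tch_continuous (n - Pi.single i 1)
    fun_prop

lemma tI_zero_zero (n : ι → ℤ) : tI 0 0 n = if n = 0 then 1 else 0 := by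
  unfold tI
  split_ifs with h
  · subst h; simp [tch_zero]
  · simpa using tch_integral_ne h

/-- total negative part -/
def negP (n : ι → ℤ) : ℕ := ∑ i, (-(n i)).toNat
/-- total positive part -/
def posP (n : ι → ℤ) : ℕ := ∑ i, (n i).toNat

lemma posP_neg (n : ι → ℤ) : posP (-n) = negP n := rfl
lemma negP_neg (n : ι → ℤ) : negP (-n) = posP n := by simp [negP, posP]

lemma posP_split (n : ι → ℤ) (i : ι) :
    posP n = (n i).toNat + ∑ x ∈ Finset.univ.erase i, (n x).toNat := by
  unfold posP
  rw [← Finset.add_sum_erase _ _ (Finset.mem_univ i)]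

lemma exists_pos_of_posP (n : ι → ℤ) (h : posP n ≠ 0) : ∃ i, 0 < n i := by
  by_contra! hc
  exact h (Finset.sum_eq_zero fun i _ => by have := hc i; omega)

lemma exists_neg_of_negP (n : ι → ℤ) (h : negP n ≠ 0) : ∃ i, n i < 0 := by
  by_contra! hc
  exact h (Finset.sum_eq_zero fun i _ => by have := hc i; omega)

lemma posP_add_single (n : ι → ℤ) (i : ι) : posP n ≤ posP (n + Pi.single i 1) := by
  unfold posP
  refine Finset.sum_le_sum fun j _ => ?_
  by_cases h : j = i
  · subst h; simp
  · simp [Pi.single_eq_of_ne h]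

lemma posP_sub_single (n : ι → ℤ) (i : ι) : posP n ≤ posP (n - Pi.single i 1) + 1 := by
  rw [posP_split n i, posP_split (n - Pi.single i 1) i]
  have : ∑ x ∈ Finset.univ.erase i, (n x).toNat
      = ∑ x ∈ Finset.univ.erase i, ((n - Pi.single i 1 : ι → ℤ) x).toNat := by
    refine Finset.sum_congr rfl fun j hj => ?_
    simp [Pi.single_eq_of_ne (Finset.ne_of_mem_erase hj)]
  rw [this]
  simp
  omega

lemma posP_sub_single_pos (n : ι → ℤ) (i : ι) (hi : 0 < n i) :
    posP n = posP (n - Pi.single i 1) + 1 ∧ negP (n - Pi.single i 1) = negP n := by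
  constructor
  · rw [posP_split n i, posP_split (n - Pi.single i 1) i]
    have : ∑ x ∈ Finset.univ.erase i, (n x).toNat
        = ∑ x ∈ Finset.univ.erase i, ((n - Pi.single i 1 : ι → ℤ) x).toNat := by
      refine Finset.sum_congr rfl fun j hj => ?_
      simp [Pi.single_eq_of_ne (Finset.ne_of_mem_erase hj)]
    rw [this]
    simp
    omega
  · unfold negP
    refine Finset.sum_congr rfl fun j _ => ?_
    by_cases h : j = i
    · subst h; simp; omega
    · simp [Pi.single_eq_of_ne h]

lemma negP_add_single (n : ι → ℤ) (i : ι) : negP n ≤ negP (n + Pi.single i 1) + 1 := by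
  have := posP_sub_single (-n) i
  rw [posP_neg, ← neg_add', posP_neg] at this
  exact this

lemma negP_sub_single (n : ι → ℤ) (i : ι) : negP n ≤ negP (n - Pi.single i 1) := by
  have := posP_add_single (-n) i
  rw [posP_neg] at this
  rwa [show -n + Pi.single i 1 = -(n - Pi.single i 1) by abel, posP_neg] at this

lemma negP_add_single_pos (n : ι → ℤ) (i : ι) (hi : n i < 0) :
    negP n = negP (n + Pi.single i 1) + 1 ∧ posP (n + Pi.single i 1) = posP n := by
  have := posP_sub_single_pos (-n) i (by simpa using hi)
  rwa [posP_neg, ← neg_add', posP_neg, negP_neg, negP_neg] at this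

lemma tI_eq_zero (a b : ℕ) (n : ι → ℤ) (h : a < negP n ∨ b < posP n) : tI a b n = 0 := by
  induction a generalizing n with
  | zero =>
    induction b generalizing n with
    | zero =>
      rw [tI_zero_zero, if_neg]
      rintro rfl
      simp [negP, posP] at h
    | succ b ih =>
      rw [tI_succ_right]
      refine Finset.sum_eq_zero fun i _ => ih _ ?_
      have := posP_sub_single n i
      have := negP_sub_single n i
      omega
  | succ a ih =>
    rw [tI_succ_left]
    refine Finset.sum_eq_zero fun i _ => ih _ ?_
    have := posP_add_single n i
    have := negP_add_single n i
    omega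

lemma tI_nonneg (a b : ℕ) (n : ι → ℤ) : 0 ≤ (tI a b n).re := by
  induction a generalizing n with
  | zero =>
    induction b generalizing n with
    | zero =>
      rw [tI_zero_zero]; split_ifs <;> simp
    | succ b ih =>
      rw [tI_succ_right, Complex.re_sum]
      exact Finset.sum_nonneg fun i _ => ih _
  | succ a ih =>
    rw [tI_succ_left, Complex.re_sum]
    exact Finset.sum_nonneg fun i _ => ih _

lemma tI_pos (a b : ℕ) (n : ι → ℤ) (ha : a = negP n) (hb : b = posP n) : 0 < (tI a b n).re := by
  induction a generalizing n with
  | zero =>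
    induction b generalizing n with
    | zero =>
      rw [tI_zero_zero, if_pos]
      · simp
      · simp only [negP, posP] at ha hb
        have h1 := Finset.sum_eq_zero_iff.mp ha.symm
        have h2 := Finset.sum_eq_zero_iff.mp hb.symm
        ext i
        have := h1 i (Finset.mem_univ i)
        have := h2 i (Finset.mem_univ i)
        simp; omega
    | succ b ih =>
      rw [tI_succ_right, Complex.re_sum]
      obtain ⟨i, hi⟩ := exists_pos_of_posP n (by rw [← hb]; exact Nat.succ_ne_zero b)
      have := posP_sub_single_pos n i hi
      have h1 := ih (n - Pi.single i 1) (by rw [this.2]; exact ha) (by omega)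
      exact Finset.sum_pos' (fun j _ => tI_nonneg _ _ _) ⟨i, Finset.mem_univ i, h1⟩
  | succ a ih =>
    rw [tI_succ_left, Complex.re_sum]
    obtain ⟨i, hi⟩ := exists_neg_of_negP n (by rw [← ha]; exact Nat.succ_ne_zero a)
    have := negP_add_single_pos n i hi
    have h1 := ih (n + Pi.single i 1) (by omega) (by rw [this.2]; exact hb)
    exact Finset.sum_pos' (fun j _ => tI_nonneg _ _ _) ⟨i, Finset.mem_univ i, h1⟩

end Core

section Asym
open Filter Topology Asymptotics

/-- the gradient of the `q`-th power of the modulus -/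
def Phi (q : ℝ) (w : ℂ) : ℂ := ((‖w‖ ^ (q - 2) : ℝ) : ℂ) * starRingEnd ℂ w

lemma Phi_eq (q : ℝ) (z : ℂ) (hz : ‖z‖ < 1) :
    Phi q (1 + z) = (1 + z) ^ ((q / 2 - 1 : ℝ) : ℂ) * (1 + starRingEnd ℂ z) ^ ((q / 2 : ℝ) : ℂ) := by
  have hs : 1 + z ∈ Complex.slitPlane := Complex.mem_slitPlane_of_norm_lt_one hz
  have h0 : 1 + z ≠ 0 := Complex.slitPlane_ne_zero hs
  have hc : 1 + starRingEnd ℂ z = starRingEnd ℂ (1 + z) := by simp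
  have hc0 : starRingEnd ℂ (1 + z) ≠ 0 := (map_ne_zero _).mpr h0
  have harg : (1 + z).arg ≠ Real.pi := (Complex.mem_slitPlane_iff_arg.mp hs).1
  rw [hc]
  have e1 : ((q / 2 : ℝ) : ℂ) = ((q / 2 - 1 : ℝ) : ℂ) + 1 := by push_cast; ring
  rw [e1, Complex.cpow_add _ _ hc0, Complex.cpow_one, ← mul_assoc]
  unfold Phi
  congr 1
  rw [Complex.cpow_def_of_ne_zero h0, Complex.cpow_def_of_ne_zero hc0, ← Complex.exp_add,
    Complex.log_conj _ harg, ← add_mul, Complex.add_conj, Complex.log_re,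
    Real.rpow_def_of_pos (norm_pos_iff.mpr h0)]
  push_cast
  congr 1
  ring

lemma choose_ne (a : ℝ) (ha : ∀ m : ℕ, a ≠ m) (n : ℕ) : Ring.choose (a : ℂ) n ≠ 0 := by
  intro h
  have h1 := Ring.descPochhammer_eq_factorial_smul_choose (a : ℂ) n
  rw [h, smul_zero] at h1
  have h2 : ∀ n : ℕ, (descPochhammer ℤ n).smeval (a : ℂ) ≠ 0 := by
    intro n
    induction n with
    | zero => simp
    | succ n ih =>
      rw [descPochhammer_succ_right, Polynomial.smeval_mul]
      refine mul_ne_zero ih ?_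
      simp only [Polynomial.smeval_sub, Polynomial.smeval_X, Polynomial.smeval_natCast, pow_one,
        pow_zero, nsmul_eq_mul, mul_one]
      intro hh
      apply ha n
      have : (a : ℂ) = n := by linear_combination hh
      exact_mod_cast this
  exact h2 n h1

lemma taylor_cpow (a : ℂ) (M : ℕ) :
    (fun z : ℂ => (1 + z) ^ a - ∑ i ∈ Finset.range M, Ring.choose a i * z ^ i)
      =O[𝓝 0] fun z => ‖z‖ ^ M := by
  have := (Complex.one_add_cpow_hasFPowerSeriesAt_zero (a := a)).isBigO_sub_partialSum_pow M
  refine this.congr_left fun z => ?_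
  simp only [zero_add, FormalMultilinearSeries.partialSum]
  congr 1
  refine Finset.sum_congr rfl fun i _ => ?_
  rw [binomialSeries_apply]
  simp

lemma taylor_Phi (q : ℝ) (M : ℕ) :
    (fun z : ℂ => Phi q (1 + z) - (∑ i ∈ Finset.range M, Ring.choose ((q / 2 - 1 : ℝ) : ℂ) i * z ^ i)
      * (∑ j ∈ Finset.range M, Ring.choose ((q / 2 : ℝ) : ℂ) j * (starRingEnd ℂ z) ^ j))
      =O[𝓝 0] fun z => ‖z‖ ^ M := by
  have h1 := taylor_cpow ((q / 2 - 1 : ℝ) : ℂ) M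
  have h2' := taylor_cpow ((q / 2 : ℝ) : ℂ) M
  have hconj : Tendsto (starRingEnd ℂ) (𝓝 0) (𝓝 0) := by
    have := Complex.continuous_conj.tendsto 0
    simpa using this
  have h2 := h2'.comp_tendsto hconj
  simp only [Function.comp_def, RCLike.norm_conj] at h2
  have hg : (fun z : ℂ => (1 + starRingEnd ℂ z) ^ ((q / 2 : ℝ) : ℂ)) =O[𝓝 0] fun _ => (1:ℝ) := by
    have hA : ContinuousAt (fun z : ℂ => (1 + z) ^ ((q / 2 : ℝ) : ℂ)) 0 :=
      (Complex.one_add_cpow_hasFPowerSeriesAt_zero (a := ((q / 2 : ℝ) : ℂ))).continuousAt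
    exact ((hA.tendsto.comp hconj)).isBigO_one ℝ
  have hP : (fun z : ℂ => ∑ i ∈ Finset.range M, Ring.choose ((q / 2 - 1 : ℝ) : ℂ) i * z ^ i)
      =O[𝓝 0] fun _ => (1:ℝ) := by
    refine Tendsto.isBigO_one ℝ (c := ∑ i ∈ Finset.range M, Ring.choose ((q / 2 - 1 : ℝ) : ℂ) i * 0 ^ i) ?_
    refine Continuous.tendsto' ?_ _ _ rfl
    fun_prop
  have h3 := h1.mul hg
  have h4 := hP.mul h2
  simp only [one_mul, mul_one] at h3 h4
  refine ((h3.add h4).congr' ?_ EventuallyEq.rfl)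
  have : ∀ᶠ z : ℂ in 𝓝 0, ‖z‖ < 1 := by
    have := Metric.ball_mem_nhds (0:ℂ) one_pos
    filter_upwards [this] with z hz
    simpa using hz
  filter_upwards [this] with z hz
  rw [Phi_eq q z hz]
  ring

variable {ι : Type*} [Fintype ι]

lemma Phi_cont (q : ℝ) {X : Type*} [TopologicalSpace X] {f : X → ℂ} (hf : Continuous f)
    (h0 : ∀ x, f x ≠ 0) : Continuous fun x => Phi q (f x) := by
  unfold Phi
  have : Continuous fun x => ‖f x‖ ^ (q - 2) :=
    hf.norm.rpow_const fun x => Or.inl (norm_ne_zero_iff.mpr (h0 x))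
  fun_prop

lemma one_add_ne (r : ℝ) (hr0 : 0 < r) (hr : r * Fintype.card ι < 1) (x : ι → AddCircle (1:ℝ)) :
    1 + (r:ℂ) * ssum x ≠ 0 := by
  have : ‖(r:ℂ) * ssum x‖ < 1 := by
    rw [norm_mul, Complex.norm_real, Real.norm_of_nonneg hr0.le]
    exact lt_of_le_of_lt (mul_le_mul_of_nonneg_left (ssum_norm_le x) hr0.le) hr
  intro h
  have h2 : (r:ℂ) * ssum x = -1 := by linear_combination h
  rw [h2] at this
  simp at this

lemma core (q : ℝ) (hq1 : 1 ≤ q) (hq : ∀ m : ℕ, 0 < m → q ≠ 2 * m) (n : ι → ℤ) (ρ : ℝ) (hρ : 0 < ρ)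
    (H : ∀ r : ℝ, 0 < r → r < ρ → ∫ x, Phi q (1 + r * ssum x) * tch n x = 0) : False := by
  set A := negP n with hA
  set B := posP n with hB
  set M := A + B with hM
  set a : ℕ → ℂ := fun i => Ring.choose ((q / 2 - 1 : ℝ) : ℂ) i with ha
  set b : ℕ → ℂ := fun i => Ring.choose ((q / 2 : ℝ) : ℂ) i with hb
  have haA : a A ≠ 0 := by
    apply choose_ne
    intro m hm
    apply hq (m + 1) (Nat.succ_pos m)
    push_cast
    linarith
  have hbB : b B ≠ 0 := by
    apply choose_ne
    intro m hm
    rcases Nat.eq_zero_or_pos m with rfl | h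
    · simp at hm; linarith
    · apply hq m h
      linarith
  have hI : tI A B n ≠ 0 := by
    intro h
    have := tI_pos A B n hA hB
    rw [h] at this
    simp at this
  -- polynomial part
  let c : ℝ → ℂ := fun r => ∑ i ∈ Finset.range (M+1), ∑ j ∈ Finset.range (M+1),
    a i * b j * tI i j n * (r:ℂ) ^ (i + j - M)
  have hc0 : c 0 = a A * b B * tI A B n := by
    simp only [c]
    rw [Finset.sum_eq_single A, Finset.sum_eq_single B]
    · simp [hM]
    · intro j _ hj
      by_cases h : j < B
      · rw [tI_eq_zero _ _ _ (Or.inr h)]; simp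
      · have : A + j - M ≠ 0 := by omega
        simp [this]
    · intro h; simp at h; omega
    · intro i _ hi
      refine Finset.sum_eq_zero fun j _ => ?_
      by_cases h : i < A ∨ j < B
      · rw [tI_eq_zero _ _ _ h]; simp
      · have : i + j - M ≠ 0 := by omega
        simp [this]
    · intro h; simp at h; omega
  have hccont : Continuous c := by
    simp only [c]
    fun_prop
  let PQ : ℂ → ℂ := fun z => (∑ i ∈ Finset.range (M+1), a i * z ^ i)
      * (∑ j ∈ Finset.range (M+1), b j * (starRingEnd ℂ z) ^ j)
  have hPQcont : Continuous PQ := by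
    simp only [PQ]
    have := Complex.continuous_conj
    fun_prop
  have hint : ∀ r : ℝ, ∫ x, PQ (r * ssum x) * tch n x = (r:ℂ) ^ M * c r := by
    intro r
    have e : ∀ x, PQ (r * ssum x) * tch n x = ∑ i ∈ Finset.range (M+1), ∑ j ∈ Finset.range (M+1),
        (a i * b j * (r:ℂ) ^ (i + j)) * (ssum x ^ i * (starRingEnd ℂ (ssum x)) ^ j * tch n x) := by
      intro x
      simp only [PQ, Finset.sum_mul, Finset.mul_sum]
      rw [Finset.sum_comm]
      refine Finset.sum_congr rfl fun i _ => Finset.sum_congr rfl fun j _ => ?_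
      simp only [map_mul, Complex.conj_ofReal]
      ring
    simp only [e]
    have hs := ssum_continuous (ι := ι)
    have ht := tch_continuous n
    have hcj := Complex.continuous_conj
    rw [integral_finsetSum]
    · simp only [c, Finset.mul_sum]
      refine Finset.sum_congr rfl fun i _ => ?_
      rw [integral_finsetSum]
      · refine Finset.sum_congr rfl fun j _ => ?_
        rw [integral_const_mul]
        change _ * tI i j n = _
        by_cases h : i < A ∨ j < B
        · rw [tI_eq_zero _ _ _ h]; simp
        · have : (r:ℂ) ^ (i + j) = (r:ℂ) ^ M * (r:ℂ) ^ (i + j - M) := by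
            rw [← pow_add]; congr 1; omega
          rw [this]; ring
      · intro j _
        apply cont_integrable
        fun_prop
    · intro i _
      apply cont_integrable
      fun_prop
  obtain ⟨C, hC⟩ := (taylor_Phi q (M+1)).bound
  obtain ⟨δ, hδ, hball⟩ := Metric.eventually_nhds_iff.mp hC
  set k : ℝ := (Fintype.card ι : ℝ) with hk
  have hk0 : 0 ≤ k := by simp [hk]
  have hrbound : ∀ r : ℝ, 0 < r → r < ρ → r * (k + 1) < min δ 1 → ‖c r‖ ≤ |C| * k ^ (M+1) * r := by
    intro r hr0 hrρ hrδ
    have hz : ∀ x : ι → AddCircle (1:ℝ), ‖(r:ℂ) * ssum x‖ ≤ r * k := by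
      intro x
      rw [norm_mul, Complex.norm_real, Real.norm_of_nonneg hr0.le]
      exact mul_le_mul_of_nonneg_left (ssum_norm_le x) hr0.le
    have hrk : r * k < min δ 1 := lt_of_le_of_lt (by nlinarith) hrδ
    have h1 : ∫ x, (Phi q (1 + r * ssum x) - PQ (r * ssum x)) * tch n x = - ((r:ℂ)^M * c r) := by
      simp only [sub_mul]
      rw [integral_sub, H r hr0 hrρ, hint, zero_sub]
      · apply cont_integrable
        have hs := ssum_continuous (ι := ι)
        refine (Phi_cont q (by fun_prop) ?_).mul (tch_continuous n)
        exact one_add_ne r hr0 (lt_of_lt_of_le hrk (min_le_right _ _))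
      · apply cont_integrable
        have hs := ssum_continuous (ι := ι)
        exact (hPQcont.comp (by fun_prop)).mul (tch_continuous n)
    have h2 : ‖∫ x, (Phi q (1 + r * ssum x) - PQ (r * ssum x)) * tch n x‖ ≤ |C| * (r * k) ^ (M+1) := by
      have := norm_integral_le_of_norm_le_const (μ := (volume : Measure (ι → AddCircle (1:ℝ))))
        (f := fun x => (Phi q (1 + r * ssum x) - PQ (r * ssum x)) * tch n x)
        (C := |C| * (r * k) ^ (M+1)) (ae_of_all _ fun x => ?_)
      · simpa using this
      · rw [norm_mul, tch_norm, mul_one]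
        have hb := hball (y := r * ssum x) (by
          rw [dist_zero_right]; exact lt_of_le_of_lt (hz x) (lt_of_lt_of_le hrk (min_le_left _ _)))
        refine hb.trans ?_
        rw [norm_pow, norm_norm]
        exact mul_le_mul (le_abs_self C) (pow_le_pow_left₀ (norm_nonneg _) (hz x) _) (by positivity)
          (abs_nonneg _)
    rw [h1, norm_neg, norm_mul, norm_pow, Complex.norm_real, Real.norm_of_nonneg hr0.le] at h2
    have hrM : 0 < r ^ M := by positivity
    refine le_of_mul_le_mul_left (h2.trans (le_of_eq ?_)) hrM
    rw [mul_pow, pow_succ r]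
    ring
  have hlim : Tendsto (fun r : ℝ => ‖c r‖) (𝓝[>] 0) (𝓝 ‖c 0‖) :=
    (hccont.norm.tendsto 0).mono_left nhdsWithin_le_nhds
  have hlim2 : Tendsto (fun r : ℝ => |C| * k ^ (M+1) * r) (𝓝[>] 0) (𝓝 0) := by
    have : Continuous fun r : ℝ => |C| * k ^ (M+1) * r := by fun_prop
    have := this.tendsto 0
    rw [mul_zero] at this
    exact this.mono_left nhdsWithin_le_nhds
  have hev : ∀ᶠ r : ℝ in 𝓝[>] 0, ‖c r‖ ≤ |C| * k ^ (M+1) * r := by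
    have hpos : 0 < min ρ (min δ 1 / (k+1)) := by positivity
    filter_upwards [Ioo_mem_nhdsGT hpos] with r hr
    refine hrbound r hr.1 (lt_of_lt_of_le hr.2 (min_le_left _ _)) ?_
    rw [← lt_div_iff₀ (by positivity)]
    exact lt_of_lt_of_le hr.2 (min_le_right _ _)
  have hfin := le_of_tendsto_of_tendsto hlim hlim2 hev
  have : c 0 = 0 := by simpa using hfin
  rw [hc0] at this
  exact mul_ne_zero (mul_ne_zero haA hbB) hI this

end Asym

section Lp
open Filter Topology
variable {ι : Type*} [Fintype ι]

lemma eLpNorm_le_iff (p : ℝ≥0∞) (hp0 : p ≠ 0) (hpt : p ≠ ∞) {f g : (ι → AddCircle (1:ℝ)) → ℂ}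
    (hf : Continuous f) (hg : Continuous g) :
    eLpNorm f p volume ≤ eLpNorm g p volume ↔
      ∫ x, ‖f x‖ ^ p.toReal ≤ ∫ x, ‖g x‖ ^ p.toReal := by
  have hmem : ∀ {f : (ι → AddCircle (1:ℝ)) → ℂ}, Continuous f → MemLp f p volume := by
    intro f hf
    obtain ⟨C, hC⟩ := (isCompact_univ (X := ι → AddCircle (1:ℝ))).exists_bound_of_continuousOn hf.continuousOn
    exact MemLp.of_bound hf.aestronglyMeasurable C (ae_of_all _ fun x => hC x (Set.mem_univ x))
  have hp : 0 < p.toReal := ENNReal.toReal_pos hp0 hpt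
  rw [(hmem hf).eLpNorm_eq_integral_rpow_norm hp0 hpt, (hmem hg).eLpNorm_eq_integral_rpow_norm hp0 hpt]
  have h1 : 0 ≤ ∫ x, ‖f x‖ ^ p.toReal := integral_nonneg fun x => by positivity
  have h2 : 0 ≤ ∫ x, ‖g x‖ ^ p.toReal := integral_nonneg fun x => by positivity
  rw [ENNReal.ofReal_le_ofReal_iff (by positivity), Real.rpow_le_rpow_iff h1 h2 (by positivity)]

lemma quad_deriv (A B C t : ℝ) :
    HasDerivAt (fun t : ℝ => A + 2 * t * B + t ^ 2 * C) (2 * B + 2 * t * C) t := by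
  have h1 : HasDerivAt (fun t : ℝ => A + 2 * t * B) (2 * B) t := by
    have := (((hasDerivAt_id' t).const_mul 2).mul_const B).const_add A
    simpa using this
  have h2 : HasDerivAt (fun t : ℝ => t ^ 2 * C) (2 * t * C) t := by
    have := (hasDerivAt_pow 2 t).mul_const C
    simpa using this
  exact h1.add h2

lemma deriv_lemma (q : ℝ) {f g : (ι → AddCircle (1:ℝ)) → ℂ}
    (hf : Continuous f) (hg : Continuous g) (h0 : ∀ x, f x ≠ 0) (hq : q ≠ 0)
    (H : ∀ t : ℝ, ∫ x, ‖f x‖ ^ q ≤ ∫ x, ‖f x + t * g x‖ ^ q) :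
    ∫ x, (Phi q (f x) * g x).re = 0 := by
  -- lower and upper bounds
  obtain ⟨G, hG⟩ := (isCompact_univ (X := ι → AddCircle (1:ℝ))).exists_bound_of_continuousOn hg.continuousOn
  have hG0 : 0 ≤ G := (norm_nonneg _).trans (hG 0 (Set.mem_univ _))
  obtain ⟨x₀, -, hx₀⟩ := (isCompact_univ (X := ι → AddCircle (1:ℝ))).exists_isMinOn Set.univ_nonempty
    hf.norm.continuousOn
  have hcpos : 0 < ‖f x₀‖ := norm_pos_iff.mpr (h0 x₀)
  have hc : ∀ x, ‖f x₀‖ ≤ ‖f x‖ := fun x => hx₀ (Set.mem_univ x)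
  set ε := ‖f x₀‖ / (2 * (G + 1)) with hε
  have hεpos : 0 < ε := by positivity
  let N : ℝ → (ι → AddCircle (1:ℝ)) → ℝ := fun t x =>
    ‖f x‖ ^ 2 + 2 * t * (starRingEnd ℂ (f x) * g x).re + t ^ 2 * ‖g x‖ ^ 2
  have hN : ∀ t x, N t x = ‖f x + t * g x‖ ^ 2 := by
    intro t x
    simp only [N, ← Complex.normSq_eq_norm_sq, Complex.normSq_apply]
    simp
    ring
  have hNpos : ∀ t, |t| ≤ ε → ∀ x, 0 < N t x := by
    intro t ht x
    rw [hN]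
    have h1 : ‖(t:ℂ) * g x‖ ≤ ‖f x₀‖ / 2 := by
      rw [norm_mul, Complex.norm_real, Real.norm_eq_abs]
      calc |t| * ‖g x‖ ≤ ε * (G + 1) :=
            mul_le_mul ht ((hG x (Set.mem_univ x)).trans (by linarith)) (norm_nonneg _) hεpos.le
        _ = ‖f x₀‖ / 2 := by rw [hε]; field_simp
    have h2 : ‖f x‖ - ‖(t:ℂ) * g x‖ ≤ ‖f x + t * g x‖ := by
      have := norm_sub_le (f x + t * g x) (t * g x)
      rw [add_sub_cancel_right] at this
      linarith
    have := hc x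
    have : 0 < ‖f x + t * g x‖ := by linarith
    positivity
  let F : ℝ → (ι → AddCircle (1:ℝ)) → ℝ := fun t x => (N t x) ^ (q / 2)
  let F' : ℝ → (ι → AddCircle (1:ℝ)) → ℝ := fun t x =>
    (2 * (starRingEnd ℂ (f x) * g x).re + 2 * t * ‖g x‖ ^ 2) * (q / 2) * (N t x) ^ (q / 2 - 1)
  have hcj := Complex.continuous_conj
  have hre := Complex.continuous_re
  have hNc : Continuous (fun y : ℝ × (ι → AddCircle (1:ℝ)) => N y.1 y.2) := by
    simp only [N]
    fun_prop
  have hF'c : ContinuousOn (fun y : ℝ × (ι → AddCircle (1:ℝ)) => F' y.1 y.2)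
      (Set.Icc (-ε) ε ×ˢ Set.univ) := by
    simp only [F']
    refine ContinuousOn.mul ?_ ?_
    · apply Continuous.continuousOn
      fun_prop
    · refine ContinuousOn.rpow_const hNc.continuousOn ?_
      rintro ⟨t, x⟩ ⟨ht, -⟩
      exact Or.inl (hNpos t (abs_le.mpr ht) x).ne'
  obtain ⟨K, hK⟩ := (isCompact_Icc.prod isCompact_univ).exists_bound_of_continuousOn hF'c
  have hFc : ∀ t, |t| ≤ ε → Continuous (F t) := by
    intro t ht
    refine Continuous.rpow_const (hNc.comp (by fun_prop : Continuous fun x => (t, x))) ?_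
    intro x
    exact Or.inl (hNpos t ht x).ne'
  have hder := hasDerivAt_integral_of_dominated_loc_of_deriv_le (μ := (volume : Measure (ι → AddCircle (1:ℝ))))
    (F := F) (F' := F') (x₀ := (0:ℝ)) (s := Set.Icc (-ε) ε) (bound := fun _ => K)
    (Icc_mem_nhds (by linarith) hεpos)
    (by
      filter_upwards [Icc_mem_nhds (a := -ε) (x := (0:ℝ)) (by linarith) hεpos] with t ht
      exact (hFc t (abs_le.mpr ht)).aestronglyMeasurable)
    (cont_integrable (hFc 0 (by simpa using hεpos.le)))
    (by
      have : Continuous (F' 0) := by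
        have := hF'c.comp_continuous (f := fun x => ((0:ℝ), x)) (by fun_prop)
          (fun x => ⟨⟨by simpa using hεpos.le, hεpos.le⟩, Set.mem_univ _⟩)
        exact this
      exact this.aestronglyMeasurable)
    (ae_of_all _ fun x t ht => hK (t, x) ⟨ht, Set.mem_univ _⟩)
    (integrable_const K)
    (ae_of_all _ fun x t ht => by
      have hd : HasDerivAt (fun t => N t x)
          (2 * (starRingEnd ℂ (f x) * g x).re + 2 * t * ‖g x‖ ^ 2) t := by
        exact quad_deriv _ _ _ t
      exact hd.rpow_const (Or.inl (hNpos t (abs_le.mpr ht) x).ne'))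
  have hFn : ∀ t x, F t x = ‖f x + t * g x‖ ^ q := by
    intro t x
    simp only [F, hN]
    rw [← Real.rpow_natCast, ← Real.rpow_mul (norm_nonneg _)]
    congr 1
    push_cast; ring
  have hmin : IsLocalMin (fun t => ∫ x, F t x) 0 := by
    refine Filter.Eventually.of_forall fun t => ?_
    simp only [hFn]
    simpa using H t
  have h := hmin.hasDerivAt_eq_zero hder.2
  have e : ∀ x, F' 0 x = q * (Phi q (f x) * g x).re := by
    intro x
    have hfx : 0 < ‖f x‖ := norm_pos_iff.mpr (h0 x)
    have e1 : (N 0 x) ^ (q / 2 - 1) = ‖f x‖ ^ (q - 2) := by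
      have : N 0 x = ‖f x‖ ^ 2 := by simp [N]
      rw [this, ← Real.rpow_natCast, ← Real.rpow_mul (norm_nonneg _)]
      congr 1
      push_cast; ring
    simp only [F', e1, Phi, mul_assoc, Complex.re_ofReal_mul]
    ring
  simp only [e] at h
  rw [integral_const_mul] at h
  exact (mul_eq_zero.mp h).resolve_left hq

end Lp

section PartOne
open Filter Topology
variable {d : ℕ}

lemma trigPoly_continuous (F : Finset (Fin d → ℤ)) (a : (Fin d → ℤ) → ℂ) :
    Continuous (trigPoly F a) := by
  unfold trigPoly
  exact continuous_finsetSum _ fun i _ => continuous_const.mul (tch_continuous i)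

lemma tch_sum {ι κ : Type*} [Fintype ι] (s : Finset κ) (m : κ → ι → ℤ) (x) :
    tch (∑ i ∈ s, m i) x = ∏ i ∈ s, tch (m i) x := by
  induction s using Finset.induction_on with
  | empty => simp [tch_zero]
  | insert a s ha ih => rw [Finset.sum_insert ha, Finset.prod_insert ha, tch_add_freq, ih]

lemma repr_closure (Γ : Set (Fin d → ℤ)) (γ₀ v : Fin d → ℤ)
    (hv : v ∈ AddSubgroup.closure ((· - γ₀) '' Γ)) :
    ∃ (S : Finset (Fin d → ℤ)) (m : (Fin d → ℤ) → ℤ), ↑S ⊆ Γ ∧ γ₀ ∉ S ∧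
      v = ∑ α ∈ S, m α • (α - γ₀) := by
  have h : v ∈ Submodule.span ℤ ((· - γ₀) '' Γ) := by
    rw [← Submodule.mem_toAddSubgroup, Submodule.span_int_eq_addSubgroupClosure]
    exact hv
  rw [Finsupp.mem_span_image_iff_linearCombination] at h
  obtain ⟨l, hl, rfl⟩ := h
  refine ⟨l.support.erase γ₀, l, ?_, by simp, ?_⟩
  · intro x hx
    rw [Finsupp.mem_supported] at hl
    exact hl (Finset.mem_of_mem_erase hx)
  · rw [Finsupp.linearCombination_apply, Finsupp.sum]
    by_cases h : γ₀ ∈ l.support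
    · rw [← Finset.add_sum_erase _ _ h]; simp
    · rw [Finset.erase_eq_of_notMem h]

/-- what contractivity says for the special test polynomials -/
lemma contr_test {p : ℝ≥0∞} {Γ : Set (Fin d → ℤ)} (hΓ : Γ ⊆ NN d) (hC : IsContractiveHp d p Γ)
    (S : Finset (Fin d → ℤ)) (hS : ↑S ⊆ Γ) (lam : Fin d → ℤ) (hl : lam ∈ NN d) (hlΓ : lam ∉ Γ)
    (a : (Fin d → ℤ) → ℂ) (t : ℂ) :
    eLpNorm (fun x => ∑ α ∈ S, a α * tch α x) p volume ≤
      eLpNorm (fun x => ∑ α ∈ S, a α * tch α x + t * tch lam x) p volume := by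
  have hlS : lam ∉ S := fun h => hlΓ (hS h)
  have h := hC (insert lam S) (by
    intro x hx
    rw [Finset.coe_insert] at hx
    rcases hx with rfl | hx
    · exact hl
    · exact hΓ (hS hx)) (Function.update a lam t)
  have hf : (insert lam S).filter (· ∈ Γ) = S := by
    rw [Finset.filter_insert, if_neg hlΓ]
    exact Finset.filter_true_of_mem fun x hx => hS hx
  rw [hf] at h
  have hcongr : ∀ x, ∑ α ∈ S, Function.update a lam t α * torusChar α x = ∑ α ∈ S, a α * tch α x := by
    intro x
    refine Finset.sum_congr rfl fun α hα => ?_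
    rw [Function.update_of_ne (by rintro rfl; exact hlS hα)]
    rfl
  have e1 : trigPoly S (Function.update a lam t) = fun x => ∑ α ∈ S, a α * tch α x := by
    ext x; exact hcongr x
  have e2 : trigPoly (insert lam S) (Function.update a lam t) =
      fun x => ∑ α ∈ S, a α * tch α x + t * tch lam x := by
    ext x
    unfold trigPoly
    rw [Finset.sum_insert hlS, hcongr x, Function.update_self, add_comm]
    rfl
  rwa [e1, e2] at h

lemma part_one_finite {p : ℝ≥0∞} (hp1 : 1 ≤ p) (hpt : p ≠ ∞) (hp : ¬ ∃ m : ℕ, 0 < m ∧ p = 2 * m)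
    {Γ : Set (Fin d → ℤ)} (hΓ : Γ ⊆ NN d) (hC : IsContractiveHp d p Γ)
    (γ₀ : Fin d → ℤ) (hγ₀ : γ₀ ∈ Γ) (S : Finset (Fin d → ℤ)) (hS : ↑S ⊆ Γ) (hSγ : γ₀ ∉ S)
    (m : (Fin d → ℤ) → ℤ) (lam : Fin d → ℤ) (hlam : lam - γ₀ = ∑ α ∈ S, m α • (α - γ₀))
    (hl : lam ∈ NN d) : lam ∈ Γ := by
  by_contra hlΓ
  have hp0 : p ≠ 0 := fun h => by simp [h] at hp1
  set q := p.toReal with hq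
  have hq1 : 1 ≤ q := by
    rw [hq, ← ENNReal.toReal_one]
    exact (ENNReal.toReal_le_toReal ENNReal.one_ne_top hpt).mpr hp1
  have hqe : ∀ m : ℕ, 0 < m → q ≠ 2 * m := by
    intro m hm h
    apply hp
    refine ⟨m, hm, ?_⟩
    rw [← ENNReal.toReal_eq_toReal_iff' hpt (by finiteness)]
    rw [← hq, h]
    simp
  let n : S → ℤ := fun α => m α
  let ξ : (Fin d → AddCircle (1:ℝ)) → (S → AddCircle (1:ℝ)) :=
    fun x α => ∑ j, ((α : Fin d → ℤ) - γ₀) j • x j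
  have hξc : Continuous ξ := by
    simp only [ξ]
    fun_prop
  have hξ1 : ∀ (α : S) x (k : ℤ), fourier k (ξ x α) = tch ((α : Fin d → ℤ) - γ₀) x ^ k := by
    intro α x k
    have : ∀ (s : Finset (Fin d)), (AddCircle.toCircle (∑ j ∈ s, ((α : Fin d → ℤ) - γ₀) j • x j) : ℂ)
        = ∏ j ∈ s, (AddCircle.toCircle (((α : Fin d → ℤ) - γ₀) j • x j) : ℂ) := by
      intro s
      induction s using Finset.induction_on with
      | empty => simp
      | insert a s ha ih =>
        rw [Finset.sum_insert ha, Finset.prod_insert ha, AddCircle.toCircle_add, Circle.coe_mul, ih]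
    rw [fourier_apply, AddCircle.toCircle_zsmul, Circle.coe_zpow]
    simp only [ξ, this]
    simp only [tch, fourier_apply]
  have hξn : ∀ x, tch n (ξ x) = tch (lam - γ₀) x := by
    intro x
    rw [hlam, tch_sum]
    simp only [tch_zsmul]
    rw [← Finset.prod_coe_sort]
    unfold tch
    exact Finset.prod_congr rfl fun α _ => hξ1 α x (n α)
  refine core q hq1 hqe n (1 / ((Fintype.card S : ℝ) + 1)) (by positivity) fun r hr0 hr => ?_
  have hr' : r * Fintype.card S < 1 := by
    rw [lt_div_iff₀ (by positivity)] at hr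
    nlinarith
  -- the test function
  have hzero : ∀ θ : S → AddCircle (1:ℝ),
      ∫ x, Phi q (1 + r * ssum (θ + ξ x)) * tch n (θ + ξ x) = 0 := by
    intro θ
    let a : (Fin d → ℤ) → ℂ := fun α => if h : α ∈ S then r * fourier 1 (θ ⟨α, h⟩) else 1
    let f : Torus d → ℂ := fun x => ∑ α ∈ insert γ₀ S, a α * tch α x
    have hf : ∀ x, f x = tch γ₀ x * (1 + r * ssum (θ + ξ x)) := by
      intro x
      simp only [f]
      rw [Finset.sum_insert hSγ]
      have h1 : a γ₀ = 1 := by simp [a, hSγ]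
      rw [h1, one_mul, mul_add, mul_one]
      congr 1
      rw [ssum_eq, ← Finset.sum_coe_sort, Finset.mul_sum, Finset.mul_sum]
      refine Finset.sum_congr rfl fun α _ => ?_
      rw [Pi.add_apply]
      have h2 : a α = r * fourier 1 (θ α) := by simp [a]
      have h3 : fourier 1 (θ α + ξ x α) = fourier 1 (θ α) * tch ((α : Fin d → ℤ) - γ₀) x := by
        have := hξ1 α x 1
        rw [zpow_one] at this
        rw [← this]
        simp [fourier_apply, AddCircle.toCircle_add]
      have h4 : tch (α : Fin d → ℤ) x = tch γ₀ x * tch ((α : Fin d → ℤ) - γ₀) x := by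
        rw [← tch_add_freq]; congr 1; abel
      rw [h2, h3, h4]
      ring
    have hfc : Continuous f := continuous_finsetSum _ fun i _ => continuous_const.mul (tch_continuous i)
    have hf0 : ∀ x, f x ≠ 0 := by
      intro x
      rw [hf]
      refine mul_ne_zero ?_ (one_add_ne r hr0 hr' _)
      intro h
      have := tch_norm γ₀ x
      rw [h] at this; simp at this
    have hmain : ∀ ω : ℂ, ∫ x, (Phi q (f x) * (ω * tch lam x)).re = 0 := by
      intro ω
      have hgc : Continuous fun x : Torus d => ω * tch lam x := continuous_const.mul (tch_continuous lam)
      refine deriv_lemma q hfc hgc hf0 (by linarith) fun t => ?_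
      have := contr_test hΓ hC (insert γ₀ S) (by
        rw [Finset.coe_insert]; exact Set.insert_subset hγ₀ hS) lam hl hlΓ a (t * ω)
      have h2 : Continuous fun x : Torus d => f x + (t*ω) * tch lam x :=
        hfc.add (continuous_const.mul (tch_continuous lam))
      have h3 := (eLpNorm_le_iff p hp0 hpt hfc h2).mp this
      simpa only [mul_assoc] using h3
    have hPc : Continuous fun x => Phi q (f x) * tch lam x :=
      (Phi_cont q hfc hf0).mul (tch_continuous lam)
    have hint : ∫ x, Phi q (f x) * tch lam x = 0 := by
      have hI := cont_integrable hPc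
      apply Complex.ext
      · have h1 := hmain 1
        simp only [one_mul] at h1
        have := integral_re hI
        simp only [RCLike.re_eq_complex_re] at this
        rw [← this, h1]; simp
      · have h1 := hmain (-Complex.I)
        have e : ∀ x, (Phi q (f x) * (-Complex.I * tch lam x)).re = (Phi q (f x) * tch lam x).im := by
          intro x
          rw [show Phi q (f x) * (-Complex.I * tch lam x) = -Complex.I * (Phi q (f x) * tch lam x) by ring]
          simp
        simp only [e] at h1
        have := integral_im hI
        simp only [RCLike.im_eq_complex_im] at this
        rw [← this, h1]; simp
    have e : ∀ x, Phi q (1 + r * ssum (θ + ξ x)) * tch n (θ + ξ x)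
        = tch n θ * (Phi q (f x) * tch lam x) := by
      intro x
      have h5 : tch (lam - γ₀) x = tch lam x * starRingEnd ℂ (tch γ₀ x) := by
        rw [sub_eq_add_neg, tch_add_freq, tch_neg]
      rw [tch_add, hξn, hf, h5]
      unfold Phi
      rw [norm_mul, tch_norm, one_mul, map_mul]
      ring
    simp only [e]
    rw [integral_const_mul, hint, mul_zero]
  -- average over θ
  let Ψ : (S → AddCircle (1:ℝ)) → ℂ := fun θ => Phi q (1 + r * ssum θ) * tch n θ
  have hΨc : Continuous Ψ := by
    have hs := ssum_continuous (ι := S)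
    exact (Phi_cont q (by fun_prop) (one_add_ne r hr0 hr')).mul (tch_continuous n)
  have hswap : ∫ θ, ∫ x, Ψ (θ + ξ x) = ∫ x, ∫ θ, Ψ (θ + ξ x) := by
    apply integral_integral_swap
    have hc : Continuous (Function.uncurry fun (θ : S → AddCircle (1:ℝ)) (x : Torus d) => Ψ (θ + ξ x)) := by
      apply hΨc.comp
      fun_prop
    apply hc.integrable_of_hasCompactSupport
    exact HasCompactSupport.of_compactSpace _
  have h1 : ∫ θ, ∫ x, Ψ (θ + ξ x) = 0 := by
    simp only [Ψ, hzero, integral_zero]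
  have h2 : ∀ x, ∫ θ, Ψ (θ + ξ x) = ∫ θ, Ψ θ := fun x => integral_add_right_eq_self Ψ (ξ x)
  rw [h1] at hswap
  simp only [h2] at hswap
  simpa using hswap.symm

end PartOne

section PartOneTop
open Filter Topology
variable {d : ℕ}

lemma all_eq_of_norm_sum {κ : Type*} (T : Finset κ) (w : κ → ℂ) (hw : ∀ α ∈ T, ‖w α‖ = 1)
    (hs : ‖∑ α ∈ T, w α‖ = T.card) : ∀ α ∈ T, (T.card : ℂ) * w α = ∑ β ∈ T, w β := by
  set s := ∑ α ∈ T, w α with hsd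
  have h1 : ∀ α ∈ T, (w α * starRingEnd ℂ s).re ≤ T.card := by
    intro α hα
    refine (Complex.re_le_norm _).trans ?_
    rw [norm_mul, hw α hα, RCLike.norm_conj, hs, one_mul]
  have h2 : ∑ α ∈ T, (w α * starRingEnd ℂ s).re = ∑ α ∈ T, (T.card : ℝ) := by
    rw [← Complex.re_sum, ← Finset.sum_mul, ← hsd, Complex.mul_conj, Complex.normSq_eq_norm_sq, hs]
    simp [sq]
  have h3 := (Finset.sum_eq_sum_iff_of_le h1).mp h2
  intro α hα
  have h4 := h3 α hα
  have h5 : Complex.normSq ((T.card : ℂ) * w α - s) = 0 := by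
    rw [Complex.normSq_sub, Complex.normSq_mul, Complex.normSq_eq_norm_sq (w α), hw α hα,
      Complex.normSq_eq_norm_sq s, hs, mul_assoc]
    rw [show ((T.card : ℂ) * (w α * (starRingEnd ℂ) s)).re = T.card * (w α * (starRingEnd ℂ) s).re by simp, h4]
    simp
    ring
  exact sub_eq_zero.mp (Complex.normSq_eq_zero.mp h5)

lemma norm_le_eLpNorm_top {f : Torus d → ℂ} (hf : Continuous f) (x : Torus d) :
    ‖f x‖ₑ ≤ eLpNorm f ∞ volume := by
  have h : ∀ᵐ y : Torus d, ‖f y‖ₑ ≤ eLpNorm f ∞ volume := by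
    rw [eLpNorm_exponent_top]
    exact ae_le_eLpNormEssSup
  have hd := Measure.dense_of_ae h
  have hc : IsClosed {y : Torus d | ‖f y‖ₑ ≤ eLpNorm f ∞ volume} :=
    isClosed_le hf.enorm continuous_const
  have : x ∈ closure {y : Torus d | ‖f y‖ₑ ≤ eLpNorm f ∞ volume} := hd x
  rwa [hc.closure_eq] at this

lemma part_one_top 
    {Γ : Set (Fin d → ℤ)} (hΓ : Γ ⊆ NN d) (hC : IsContractiveHp d ∞ Γ)
    (γ₀ : Fin d → ℤ) (hγ₀ : γ₀ ∈ Γ) (S : Finset (Fin d → ℤ)) (hS : ↑S ⊆ Γ)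
    (m : (Fin d → ℤ) → ℤ) (lam : Fin d → ℤ) (hlam : lam - γ₀ = ∑ α ∈ S, m α • (α - γ₀))
    (hl : lam ∈ NN d) : lam ∈ Γ := by
  by_contra hlΓ
  set T := insert γ₀ S with hT
  have hγT : γ₀ ∈ T := Finset.mem_insert_self _ _
  have hM1 : (1:ℝ) ≤ T.card := by exact_mod_cast Finset.card_pos.mpr ⟨γ₀, hγT⟩
  obtain ⟨M, hM⟩ : ∃ M : ℝ, M = (T.card : ℝ) := ⟨_, rfl⟩
  rw [← hM] at hM1
  let f : Torus d → ℂ := fun x => ∑ α ∈ T, 1 * tch α x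
  have hfc : Continuous f := continuous_finsetSum _ fun i _ => continuous_const.mul (tch_continuous i)
  have hf1 : ∀ x, f x = ∑ α ∈ T, tch α x := fun x => by simp [f]
  have hfM : ∀ x, ‖f x‖ ≤ M := by
    intro x
    rw [hf1]
    refine (norm_sum_le _ _).trans ?_
    simp [tch_norm, hM]
  have hf0 : f 0 = M := by
    rw [hf1]; simp [tch_zero_right, hM]
  let v : Torus d → ℝ := fun x => (f x * starRingEnd ℂ (tch lam x)).re
  have hvc : Continuous v := 
    Complex.continuous_re.comp (hfc.mul (Complex.continuous_conj.comp (tch_continuous lam)))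
  have hvM : ∀ x, -M ≤ v x := by
    intro x
    have h1 : |v x| ≤ M := by
      refine (Complex.abs_re_le_norm _).trans ?_
      rw [norm_mul, RCLike.norm_conj, tch_norm, mul_one]
      exact hfM x
    exact (abs_le.mp h1).1
  have hu : ∀ x, ‖f x‖ = M → v x = M := by
    intro x hx
    have h1 := all_eq_of_norm_sum T (fun α => tch α x) (fun α _ => tch_norm _ _) (by rw [← hf1, hx, hM])
    have hMC : (T.card : ℂ) ≠ 0 := by
      intro h
      have h' : (T.card : ℝ) = 0 := by exact_mod_cast h
      rw [hM] at hM1; linarith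
    have h2 : ∀ α ∈ S, tch α x = tch γ₀ x := by
      intro α hα
      have := (h1 α (Finset.mem_insert_of_mem hα)).trans (h1 γ₀ hγT).symm
      exact mul_left_cancel₀ hMC this
    have hsub : ∀ α : Fin d → ℤ, tch (α - γ₀) x * tch γ₀ x = tch α x := by
      intro α; rw [← tch_add_freq]; congr 1; abel
    have hne : tch γ₀ x ≠ 0 := by
      intro h
      have := tch_norm γ₀ x
      rw [h] at this; simp at this
    have h3 : tch (lam - γ₀) x = 1 := by
      rw [hlam, tch_sum]
      refine Finset.prod_eq_one fun α hα => ?_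
      rw [tch_zsmul]
      have : tch (α - γ₀) x = 1 := by
        have h4 := hsub α
        rw [h2 α hα] at h4
        exact mul_right_cancel₀ hne (by rw [h4, one_mul])
      rw [this, one_zpow]
    have h4 : tch lam x = tch γ₀ x := by rw [← hsub lam, h3, one_mul]
    simp only [v]
    rw [h4, hf1, ← h1 γ₀ hγT, mul_assoc, Complex.mul_conj, Complex.normSq_eq_norm_sq, tch_norm]
    simp [hM]
  -- lower bound away
  have hη : ∃ η : ℝ, 0 < η ∧ ∀ x, v x ≤ 1/2 → η ≤ M^2 - ‖f x‖^2 := by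
    have hK : IsCompact {x : Torus d | v x ≤ 1/2} := (isClosed_le hvc continuous_const).isCompact
    by_cases hne : ({x : Torus d | v x ≤ 1/2}).Nonempty
    · obtain ⟨x₀, hx₀, hmin⟩ := hK.exists_isMinOn hne
        (f := fun x => M^2 - ‖f x‖^2) (by fun_prop)
      refine ⟨M^2 - ‖f x₀‖^2, ?_, fun x hx => hmin hx⟩
      have h1 := hfM x₀
      have h2 : ‖f x₀‖ ≠ M := by
        intro h
        have := hu x₀ h
        have h3 : v x₀ ≤ 1/2 := hx₀
        linarith
      have h3 : ‖f x₀‖ < M := lt_of_le_of_ne h1 h2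
      nlinarith [norm_nonneg (f x₀)]
    · refine ⟨1, one_pos, fun x hx => (hne ⟨x, hx⟩).elim⟩
  obtain ⟨η, hη0, hη⟩ := hη
  have hex : ∀ δ : ℝ, 0 < δ → ∃ x, M^2 ≤ ‖f x‖^2 - 2 * δ * v x + δ^2 := by
    intro δ hδ
    have h1 := contr_test hΓ hC T (by
        rw [hT, Finset.coe_insert]; exact Set.insert_subset hγ₀ hS) lam hl hlΓ (fun _ => 1) (-δ : ℂ)
    let g : Torus d → ℂ := fun x => f x + (-δ : ℂ) * tch lam x
    have hgc : Continuous g := hfc.add (continuous_const.mul (tch_continuous lam))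
    obtain ⟨x, -, hx⟩ := (isCompact_univ (X := Torus d)).exists_isMaxOn Set.univ_nonempty
      hgc.norm.continuousOn
    refine ⟨x, ?_⟩
    have h2 : eLpNorm g ∞ volume ≤ ENNReal.ofReal ‖g x‖ := by
      rw [eLpNorm_exponent_top]
      exact eLpNormEssSup_le_of_ae_bound (ae_of_all _ fun y => hx (Set.mem_univ y))
    have h3 : ‖f 0‖ₑ ≤ ENNReal.ofReal ‖g x‖ := (norm_le_eLpNorm_top hfc 0).trans (h1.trans h2)
    rw [← ofReal_norm, ENNReal.ofReal_le_ofReal_iff (norm_nonneg _), hf0, Complex.norm_real,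
      Real.norm_of_nonneg (by linarith)] at h3
    have h4 : ‖g x‖^2 = ‖f x‖^2 - 2 * δ * v x + δ^2 := by
      have hn : ‖tch lam x‖^2 = 1 := by rw [tch_norm]; norm_num
      simp only [g, v]
      rw [← Complex.normSq_eq_norm_sq, Complex.normSq_apply] at hn ⊢
      rw [← Complex.normSq_eq_norm_sq, Complex.normSq_apply]
      simp
      linear_combination δ^2 * hn
    rw [← h4]
    nlinarith
  obtain ⟨x, hx⟩ := hex (min 1 (η / (2 * (1 + 2 * M)))) (by positivity)
  set δ := min 1 (η / (2 * (1 + 2 * M)))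
  have hδ0 : 0 < δ := by positivity
  have hδ1 : δ ≤ 1 := min_le_left _ _
  have hδ2 : δ * (1 + 2 * M) ≤ η / 2 := by
    have : δ ≤ η / (2 * (1 + 2 * M)) := min_le_right _ _
    rw [le_div_iff₀ (by positivity)] at this
    linarith
  by_cases hv : v x ≤ 1/2
  · have := hη x hv
    have h2 := hvM x
    nlinarith
  · have h1 := hfM x
    have h2 : ‖f x‖^2 ≤ M^2 := by gcongr
    push Not at hv
    nlinarith

lemma part_one {p : ℝ≥0∞} (hp1 : 1 ≤ p) (hp : ¬ ∃ m : ℕ, 0 < m ∧ p = 2 * m) (k : ℕ) :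
    ContractiveRestrictionProperty d p k := by
  intro Γ hne hΓ _ hC
  obtain ⟨γ₀, hγ₀⟩ := hne
  refine ⟨(γ₀ + ·) '' (AddSubgroup.closure ((· - γ₀) '' Γ) : Set (Fin d → ℤ)), ⟨γ₀, _, rfl⟩, ?_⟩
  apply Set.Subset.antisymm
  · intro x hx
    exact ⟨⟨x - γ₀, AddSubgroup.subset_closure ⟨x, hx, rfl⟩, by simp⟩, hΓ hx⟩
  · rintro lam ⟨⟨v, hv, rfl⟩, hl⟩
    obtain ⟨S, m, hS, hSγ, hvS⟩ := repr_closure Γ γ₀ v hv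
    by_cases hpt : p = ∞
    · subst hpt
      exact part_one_top hΓ hC γ₀ hγ₀ S hS m _ (by simpa using hvS) hl
    · exact part_one_finite hp1 hpt hp hΓ hC γ₀ hγ₀ S hS hSγ m _ (by simpa using hvS) hl

end PartOneTop

section PartTwo
open Filter Topology
variable {d : ℕ}

lemma young_nat (A B : ℝ) (hA : 0 ≤ A) (hB : 0 ≤ B) (n : ℕ) :
    (n + 1) * (A ^ n * B) ≤ n * A ^ (n + 1) + B ^ (n + 1) := by
  induction n with
  | zero => simp
  | succ n ih =>
    have h1 := mul_le_mul_of_nonneg_left ih hB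
    have h2 : 0 ≤ (n + 1) * A ^ n * (B - A) ^ 2 := by positivity
    push_cast
    have e1 : A ^ (n + 1) = A ^ n * A := pow_succ _ _
    have e2 : A ^ (n + 1 + 1) = A ^ n * A * A := by rw [pow_succ, pow_succ]
    have e3 : B ^ (n + 1 + 1) = B ^ (n + 1) * B := by rw [pow_succ]
    rw [e1] at h1
    rw [e1, e2, e3]
    nlinarith

lemma moment_zero {κ : Type*} [Fintype κ] (γ : κ → Fin d → ℤ) (A : Finset (Fin d → ℤ))
    (hA : ↑A ⊆ Set.range γ) (a : (Fin d → ℤ) → ℂ) (p q : ℕ) (n : Fin d → ℤ)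
    (h : ∀ m : κ → ℤ, ∑ j, m j = p - q → (∀ j, -(q:ℤ) ≤ m j ∧ m j ≤ p) → ∑ j, m j • γ j + n ≠ 0) :
    ∫ x, trigPoly A a x ^ p * (starRingEnd ℂ (trigPoly A a x)) ^ q * tch n x = 0 := by
  have hc := trigPoly_continuous A a
  have hcc : Continuous fun x => starRingEnd ℂ (trigPoly A a x) := Complex.continuous_conj.comp hc
  induction p generalizing n with
  | zero =>
    induction q generalizing n with
    | zero =>
      have := h 0 (by simp) (by simp)
      simp only [pow_zero, one_mul]
      apply tch_integral_ne
      simpa using this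
    | succ q ih =>
      have e : ∀ x, trigPoly A a x ^ 0 * (starRingEnd ℂ (trigPoly A a x)) ^ (q+1) * tch n x =
          ∑ α ∈ A, starRingEnd ℂ (a α) * (trigPoly A a x ^ 0 * (starRingEnd ℂ (trigPoly A a x)) ^ q * tch (n - α) x) := by
        intro x
        simp only [sub_eq_add_neg, tch_add_freq, tch_neg]
        rw [pow_succ]
        nth_rewrite 3 [trigPoly]
        simp only [map_sum, Finset.mul_sum, Finset.sum_mul, torusChar_eq, map_mul]
        refine Finset.sum_congr rfl fun i _ => ?_
        ring
      simp only [e]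
      rw [integral_finsetSum]
      · refine Finset.sum_eq_zero fun α hα => ?_
        rw [integral_const_mul, ih, mul_zero]
        intro m hm hmb
        obtain ⟨i, hi⟩ := hA hα
        have := h (m - Pi.single i 1) (by
          simp [hm]; ring) (by
          intro j
          have := hmb j
          by_cases hj : j = i
          · subst hj; simp; push_cast at *; omega
          · simp [Pi.single_eq_of_ne hj]; push_cast at *; omega)
        intro h0
        apply this
        rw [← h0, ← hi]
        simp [sub_smul, Finset.sum_sub_distrib, Pi.single_apply, ite_smul]
        abel
      · intro α _
        apply cont_integrable
        have := tch_continuous (n - α)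
        fun_prop
  | succ p ih =>
      have e : ∀ x, trigPoly A a x ^ (p+1) * (starRingEnd ℂ (trigPoly A a x)) ^ q * tch n x =
          ∑ α ∈ A, a α * (trigPoly A a x ^ p * (starRingEnd ℂ (trigPoly A a x)) ^ q * tch (n + α) x) := by
        intro x
        simp only [tch_add_freq]
        rw [pow_succ]
        nth_rewrite 2 [trigPoly]
        simp only [Finset.mul_sum, Finset.sum_mul, torusChar_eq]
        refine Finset.sum_congr rfl fun i _ => ?_
        ring
      simp only [e]
      rw [integral_finsetSum]
      · refine Finset.sum_eq_zero fun α hα => ?_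
        rw [integral_const_mul, ih, mul_zero]
        intro m hm hmb
        obtain ⟨i, hi⟩ := hA hα
        have := h (m + Pi.single i 1) (by
          simp [Finset.sum_add_distrib, hm]; ring) (by
          intro j
          have := hmb j
          by_cases hj : j = i
          · subst hj; simp; push_cast at *; omega
          · simp [Pi.single_eq_of_ne hj]; push_cast at *; omega)
        intro h0
        apply this
        rw [← h0, ← hi]
        simp [add_smul, Finset.sum_add_distrib, Pi.single_apply, ite_smul]
        abel
      · intro α _
        apply cont_integrable
        have := tch_continuous (n + α)
        fun_prop

lemma contractive_of_closure {κ : Type*} [Fintype κ] (γ : κ → Fin d → ℤ) (N : ℕ) (hN : 0 < N)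
    (hcl : ∀ m : κ → ℤ, ∑ j, m j = 1 → (∀ j, -(N:ℤ) ≤ m j ∧ m j ≤ N) → ∑ j, m j • γ j ∈ NN d →
      ∑ j, m j • γ j ∈ Set.range γ) :
    IsContractiveHp d (2 * N) (Set.range γ) := by
  obtain ⟨Γ, hΓ⟩ : ∃ Γ, Γ = Set.range γ := ⟨_, rfl⟩
  rw [← hΓ] at hcl ⊢
  intro F hF a
  obtain ⟨n, rfl⟩ : ∃ n, N = n + 1 := ⟨N - 1, by omega⟩
  have hp0 : (2 * ((n + 1 : ℕ) : ℝ≥0∞)) ≠ 0 := by simp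
  have hpt : (2 * ((n + 1 : ℕ) : ℝ≥0∞)) ≠ ∞ := by finiteness
  have hpr : (2 * ((n + 1 : ℕ) : ℝ≥0∞)).toReal = ((2 * n + 1 + 1 : ℕ) : ℝ) := by
    rw [ENNReal.toReal_mul, ENNReal.toReal_natCast]; simp; ring
  set A := F.filter (· ∈ Γ) with hA
  have hAc := trigPoly_continuous A a
  have hFc := trigPoly_continuous F a
  rw [eLpNorm_le_iff _ hp0 hpt hAc hFc, hpr]
  simp only [Real.rpow_natCast]
  let P : Torus d → ℂ := fun x => trigPoly A a x ^ n * (starRingEnd ℂ (trigPoly A a x)) ^ (n+1)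
  have hPc : Continuous P := by
    have hcc : Continuous fun x => starRingEnd ℂ (trigPoly A a x) := Complex.continuous_conj.comp hAc
    fun_prop
  have hsplit : ∀ x, trigPoly F a x = trigPoly A a x +
      ∑ α ∈ F.filter (fun α => ¬ α ∈ Γ), a α * tch α x := by
    intro x
    exact (Finset.sum_filter_add_sum_filter_not F (· ∈ Γ) _).symm
  have hPg : ∫ x, P x * (∑ α ∈ F.filter (fun α => ¬ α ∈ Γ), a α * tch α x) = 0 := by
    have e : ∀ x, P x * (∑ α ∈ F.filter (fun α => ¬ α ∈ Γ), a α * tch α x) =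
        ∑ α ∈ F.filter (fun α => ¬ α ∈ Γ), a α * (P x * tch α x) := by
      intro x
      rw [Finset.mul_sum]
      exact Finset.sum_congr rfl fun i _ => by ring
    simp only [e]
    rw [integral_finsetSum]
    · refine Finset.sum_eq_zero fun α hα => ?_
      rw [Finset.mem_filter] at hα
      rw [integral_const_mul]
      simp only [P]
      rw [moment_zero γ A, mul_zero]
      · intro x hx
        rw [← hΓ]; exact (Finset.mem_filter.mp hx).2
      · intro m hm hmb h0
        have e1 : ∑ j, (-m) j • γ j = α := by
          simp only [Pi.neg_apply, neg_smul, Finset.sum_neg_distrib]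
          rw [eq_comm, ← sub_eq_zero, sub_neg_eq_add, add_comm]
          exact h0
        apply hα.2
        rw [← e1]
        apply hcl
        · simp [hm]
        · intro j
          have := hmb j
          simp only [Pi.neg_apply]
          push_cast at *
          omega
        · rw [e1]; exact hF hα.1
    · intro α _
      apply cont_integrable
      have := tch_continuous α
      fun_prop
  have hPA : ∀ x, P x * trigPoly A a x = ((‖trigPoly A a x‖ ^ (2 * n + 1 + 1) : ℝ) : ℂ) := by
    intro x
    simp only [P]
    have := Complex.mul_conj (trigPoly A a x)
    rw [Complex.normSq_eq_norm_sq] at this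
    rw [show 2 * n + 1 + 1 = 2 * (n + 1) by ring, pow_mul ‖trigPoly A a x‖, Complex.ofReal_pow, ← this]
    ring
  have hI1 : ∫ x, P x * trigPoly F a x = ∫ x, P x * trigPoly A a x := by
    have e : ∀ x, P x * trigPoly F a x = P x * trigPoly A a x +
      P x * ∑ α ∈ F.filter (fun α => ¬ α ∈ Γ), a α * tch α x := by
      intro x; rw [hsplit x, mul_add]
    simp only [e]
    rw [integral_add, hPg, add_zero]
    · exact cont_integrable (by fun_prop)
    · apply cont_integrable
      refine hPc.mul (continuous_finsetSum _ fun i _ => continuous_const.mul (tch_continuous i))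
  have hI2 : ∫ x, ‖trigPoly A a x‖ ^ (2 * n + 1 + 1) = ∫ x, (P x * trigPoly F a x).re := by
    have h1 := integral_re (cont_integrable (hPc.mul hFc))
    simp only [RCLike.re_eq_complex_re, Pi.mul_apply] at h1
    rw [h1, hI1]
    simp only [hPA]
    rw [integral_complex_ofReal, Complex.ofReal_re]
  have hpt : ∀ x, (2 * n + 2 : ℝ) * (P x * trigPoly F a x).re ≤
      (2 * n + 1) * ‖trigPoly A a x‖ ^ (2 * n + 1 + 1) + ‖trigPoly F a x‖ ^ (2 * n + 1 + 1) := by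
    intro x
    have h1 := young_nat ‖trigPoly A a x‖ ‖trigPoly F a x‖ (norm_nonneg _) (norm_nonneg _) (2 * n + 1)
    have h2 : (P x * trigPoly F a x).re ≤ ‖trigPoly A a x‖ ^ (2 * n + 1) * ‖trigPoly F a x‖ := by
      refine (Complex.re_le_norm _).trans (le_of_eq ?_)
      simp only [P, norm_mul, norm_pow, RCLike.norm_conj]
      ring
    push_cast at h1
    nlinarith
  have hmono := integral_mono (μ := volume) (cont_integrable (by fun_prop)) (cont_integrable (by fun_prop)) hpt
  rw [integral_const_mul, integral_add (cont_integrable (by fun_prop)) (cont_integrable (by fun_prop)), integral_const_mul, ← hI2] at hmono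
  linarith

end PartTwo

section Example
variable {d : ℕ}

/-- the points of the counterexample -/
def gam (d s : ℕ) (a K W : ℤ) : Fin 4 ⊕ Fin s → Fin d → ℤ
  | Sum.inl i, c =>
    if c.val = 0 then (![0, 1, K, K - a] : Fin 4 → ℤ) i
    else if c.val = 1 then (![1, 0, 1 + K, 1 + K + a] : Fin 4 → ℤ) i
    else if c.val = 2 then (![K, K - a, 0, 1] : Fin 4 → ℤ) i
    else if c.val = 3 then (![1 + K, 1 + K + a, 1, 0] : Fin 4 → ℤ) i
    else 0
  | Sum.inr j, c => if c.val = j.val + 3 then W else 0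

/-- the value of the third-coordinate contribution -/
def yy {s : ℕ} (m : Fin 4 ⊕ Fin s → ℤ) : ℤ := ∑ j : Fin s, if j.val = 0 then m (Sum.inr j) else 0

lemma gam_coord {s : ℕ} (a K W : ℤ) (m : Fin 4 ⊕ Fin s → ℤ) (c : Fin d) :
    (∑ i, m i • gam d s a K W i) c =
      (∑ i : Fin 4, m (Sum.inl i) * gam d s a K W (Sum.inl i) c) +
      ∑ j : Fin s, if c.val = j.val + 3 then m (Sum.inr j) * W else 0 := by
  rw [Fintype.sum_sum_type]
  simp [Finset.sum_apply, gam]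

lemma gam_c0 {s : ℕ} (a K W : ℤ) (m : Fin 4 ⊕ Fin s → ℤ) (hd : 4 ≤ d) :
    (∑ i, m i • gam d s a K W i) ⟨0, by omega⟩ =
      m (Sum.inl 1) + m (Sum.inl 2) * K + m (Sum.inl 3) * (K - a) := by
  rw [gam_coord, Finset.sum_eq_zero (s := (Finset.univ : Finset (Fin s)))]
  · simp [gam, Fin.sum_univ_four]
  · intro j _; rw [if_neg]; simp

lemma gam_c1 {s : ℕ} (a K W : ℤ) (m : Fin 4 ⊕ Fin s → ℤ) (hd : 4 ≤ d) :
    (∑ i, m i • gam d s a K W i) ⟨1, by omega⟩ =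
      m (Sum.inl 0) + m (Sum.inl 2) * (1 + K) + m (Sum.inl 3) * (1 + K + a) := by
  rw [gam_coord, Finset.sum_eq_zero (s := (Finset.univ : Finset (Fin s)))]
  · simp [gam, Fin.sum_univ_four]
  · intro j _; rw [if_neg]; simp

lemma gam_c2 {s : ℕ} (a K W : ℤ) (m : Fin 4 ⊕ Fin s → ℤ) (hd : 4 ≤ d) :
    (∑ i, m i • gam d s a K W i) ⟨2, by omega⟩ =
      m (Sum.inl 0) * K + m (Sum.inl 1) * (K - a) + m (Sum.inl 3) := by
  rw [gam_coord, Finset.sum_eq_zero (s := (Finset.univ : Finset (Fin s)))]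
  · simp [gam, Fin.sum_univ_four]
  · intro j _; rw [if_neg]; simp

lemma gam_c3 {s : ℕ} (a K W : ℤ) (m : Fin 4 ⊕ Fin s → ℤ) (hd : 4 ≤ d) :
    (∑ i, m i • gam d s a K W i) ⟨3, by omega⟩ =
      m (Sum.inl 0) * (1 + K) + m (Sum.inl 1) * (1 + K + a) + m (Sum.inl 2) + yy m * W := by
  rw [gam_coord]
  congr 1
  · simp [gam, Fin.sum_univ_four]
  · unfold yy
    rw [Finset.sum_mul]
    refine Finset.sum_congr rfl fun j _ => ?_
    by_cases h : j.val = 0 <;> simp [h]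

lemma gam_cj {s : ℕ} (a K W : ℤ) (m : Fin 4 ⊕ Fin s → ℤ) (hsd : s + 3 ≤ d) (j : Fin s)
    (hj : j.val ≠ 0) :
    (∑ i, m i • gam d s a K W i) ⟨j.val + 3, by omega⟩ = m (Sum.inr j) * W := by
  rw [gam_coord, Finset.sum_eq_zero (s := (Finset.univ : Finset (Fin 4))),
    Finset.sum_eq_single j]
  · simp
  · intro b _ hb
    rw [if_neg]
    simp only [add_left_inj]
    exact fun h => hb (Fin.ext h.symm)
  · simp
  · intro i _
    simp [gam, hj]

lemma yy_eq {s : ℕ} (m : Fin 4 ⊕ Fin s → ℤ) (j : Fin s) (hj : j.val = 0) : yy m = m (Sum.inr j) := by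
  unfold yy
  rw [Finset.sum_eq_single j]
  · simp [hj]
  · intro b _ hb
    rw [if_neg]
    exact fun h => hb (Fin.ext (h.trans hj.symm))
  · simp

lemma mul_small (a x y : ℤ) (N : ℤ) (ha : a = N + 2) (hx : -N ≤ x ∧ x ≤ N) 
    (h1 : 0 ≤ x - a * y) (h2 : x - a * y ≤ 1) : y = 0 := by
  have hN : 0 ≤ N := by omega
  by_contra h
  rcases lt_or_gt_of_ne h with h | h
  · have : a * y ≤ a * (-1) := mul_le_mul_of_nonneg_left (by omega) (by omega)
    omega
  · have : a * 1 ≤ a * y := mul_le_mul_of_nonneg_left (by omega) (by omega)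
    omega

lemma arith_neg (N a K m0 m1 m2 m3 : ℤ) (hN : 1 ≤ N) (ha : a = N + 2) (hK : K = a ^ 2)
    (h1 : -N ≤ m1 ∧ m1 ≤ N) (h3 : -N ≤ m3 ∧ m3 ≤ N)
    (hh : m0 + m1 + m2 + m3 ≤ 0)
    (c0 : 0 ≤ m1 + m2 * K + m3 * (K - a))
    (c1 : 0 ≤ m0 + m2 * (1 + K) + m3 * (1 + K + a))
    (c2 : 0 ≤ m0 * K + m1 * (K - a) + m3) : m0 = 0 ∧ m1 = 0 ∧ m2 = 0 ∧ m3 = 0 := by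
  have hKp : 0 < K := by rw [hK, ha]; positivity
  have hz : 0 ≤ m2 + m3 := by
    by_contra h
    push Not at h
    nlinarith
  have hzh : m2 + m3 ≤ m0 + m1 + m2 + m3 := by
    by_contra h
    push Not at h
    have : K * (m0 + m1 + 1) ≤ 0 := mul_nonpos_of_nonneg_of_nonpos hKp.le (by linarith)
    have : N + a * N < K := by rw [hK, ha]; nlinarith
    have : -(a * m1) ≤ a * N := by nlinarith
    nlinarith
  have z0 : m2 = - m3 := by linarith
  have h0 : m0 = - m1 := by linarith
  subst z0 h0
  have hy := mul_small a m1 m3 N ha h1 (by linarith) (by linarith)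
  subst hy
  have : m1 = 0 := by linarith
  subst this
  simp

lemma arith_one (N a K m0 m1 m2 m3 : ℤ) (hN : 1 ≤ N) (ha : a = N + 2) (hK : K = a ^ 2)
    (h1 : -N ≤ m1 ∧ m1 ≤ N) (h3 : -N ≤ m3 ∧ m3 ≤ N)
    (hh : m0 + m1 + m2 + m3 = 1)
    (c0 : 0 ≤ m1 + m2 * K + m3 * (K - a))
    (c1 : 0 ≤ m0 + m2 * (1 + K) + m3 * (1 + K + a))
    (c2 : 0 ≤ m0 * K + m1 * (K - a) + m3)
    (c3 : 0 ≤ m0 * (1 + K) + m1 * (1 + K + a) + m2) : 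
    (m0 = 1 ∧ m1 = 0 ∧ m2 = 0 ∧ m3 = 0) ∨ (m0 = 0 ∧ m1 = 1 ∧ m2 = 0 ∧ m3 = 0) ∨
    (m0 = 0 ∧ m1 = 0 ∧ m2 = 1 ∧ m3 = 0) ∨ (m0 = 0 ∧ m1 = 0 ∧ m2 = 0 ∧ m3 = 1) := by
  have hKp : 1 < K := by rw [hK, ha]; nlinarith
  have hz : 0 ≤ m2 + m3 := by
    by_contra h
    push Not at h
    nlinarith
  have hz1 : m2 + m3 ≤ 1 := by
    by_contra h
    push Not at h
    nlinarith
  obtain hz2 | hz2 : m2 + m3 = 0 ∨ m2 + m3 = 1 := by omega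
  · have z0 : m2 = - m3 := by linarith
    have h0 : m0 = 1 - m1 := by linarith
    subst z0 h0
    have hy := mul_small a m1 m3 N ha h1 (by linarith) (by linarith)
    subst hy
    have q1 : 0 ≤ m1 := by linarith
    have q2 : m1 ≤ 1 := by linarith
    obtain q | q : m1 = 0 ∨ m1 = 1 := by omega
    all_goals simp [q]
  · have z0 : m2 = 1 - m3 := by linarith
    have h0 : m0 = - m1 := by linarith
    subst z0 h0
    have hy := mul_small a m3 m1 N ha h3 (by linarith) (by linarith)
    subst hy
    have q1 : 0 ≤ m3 := by linarith
    have q2 : m3 ≤ 1 := by linarith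
    obtain q | q : m3 = 0 ∨ m3 = 1 := by omega
    all_goals simp [q]

lemma gam_closure {s : ℕ} (N a K W : ℤ) (hN : 1 ≤ N) (ha : a = N + 2) (hK : K = a ^ 2)
    (hW : W = 6 * K * N + a * N + 6 * N) (hd : 4 ≤ d) (hsd : s + 3 ≤ d)
    (m : Fin 4 ⊕ Fin s → ℤ) (hm : ∑ j, m j = 1) (hb : ∀ j, -N ≤ m j ∧ m j ≤ N)
    (hc : ∑ j, m j • gam d s a K W j ∈ NN d) :
    ∑ j, m j • gam d s a K W j ∈ Set.range (gam d s a K W) := by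
  suffices h : ∃ i, m = Pi.single i 1 by
    obtain ⟨i, rfl⟩ := h
    refine ⟨i, ?_⟩
    simp [Pi.single_apply, ite_smul]
  have hKp : 0 < K := by rw [hK, ha]; positivity
  have hWp : 0 < W := by rw [hW]; have : 0 < a := by omega
                         positivity
  have c0 := hc ⟨0, by omega⟩
  have c1 := hc ⟨1, by omega⟩
  have c2 := hc ⟨2, by omega⟩
  have c3 := hc ⟨3, by omega⟩
  rw [gam_c0 _ _ _ _ hd] at c0
  rw [gam_c1 _ _ _ _ hd] at c1
  rw [gam_c2 _ _ _ _ hd] at c2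
  rw [gam_c3 _ _ _ _ hd] at c3
  have hy : 0 ≤ yy m := by
    by_contra h
    push Not at h
    have h0 := (hb (Sum.inl 0)).2
    have h1 := (hb (Sum.inl 1)).2
    have h2 := (hb (Sum.inl 2)).2
    have e0 : m (Sum.inl 0) * (1 + K) ≤ N * (1 + K) := mul_le_mul_of_nonneg_right h0 (by omega)
    have e1 : m (Sum.inl 1) * (1 + K + a) ≤ N * (1 + K + a) := mul_le_mul_of_nonneg_right h1 (by omega)
    have e2 : yy m * W ≤ -1 * W := mul_le_mul_of_nonneg_right (by omega) (by omega)
    nlinarith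
  have hnn : ∀ j : Fin s, 0 ≤ m (Sum.inr j) := by
    intro j
    by_cases hj : j.val = 0
    · rw [← yy_eq m j hj]; exact hy
    · have := hc ⟨j.val + 3, by omega⟩
      rw [gam_cj _ _ _ _ hsd j hj] at this
      exact nonneg_of_mul_nonneg_left this hWp
  rw [Fintype.sum_sum_type, Fin.sum_univ_four] at hm
  have hT : 0 ≤ ∑ j : Fin s, m (Sum.inr j) := Finset.sum_nonneg fun j _ => hnn j
  by_cases hT0 : ∑ j : Fin s, m (Sum.inr j) = 0
  · have hz : ∀ j : Fin s, m (Sum.inr j) = 0 := fun j =>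
      (Finset.sum_eq_zero_iff_of_nonneg fun j _ => hnn j).mp hT0 j (Finset.mem_univ j)
    have hy0 : yy m = 0 := by
      unfold yy
      exact Finset.sum_eq_zero fun j _ => by simp [hz j]
    rw [hy0] at c3
    have := arith_one N a K _ _ _ _ hN ha hK (hb (Sum.inl 1)) (hb (Sum.inl 3)) (by linarith) c0 c1 c2
      (by linarith)
    rcases this with h | h | h | h
    · refine ⟨Sum.inl 0, ?_⟩
      ext (i | j)
      · fin_cases i <;> simp [h]
      · simp [hz]
    · refine ⟨Sum.inl 1, ?_⟩
      ext (i | j)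
      · fin_cases i <;> simp [h]
      · simp [hz]
    · refine ⟨Sum.inl 2, ?_⟩
      ext (i | j)
      · fin_cases i <;> simp [h]
      · simp [hz]
    · refine ⟨Sum.inl 3, ?_⟩
      ext (i | j)
      · fin_cases i <;> simp [h]
      · simp [hz]
  · have h := arith_neg N a K _ _ _ _ hN ha hK (hb (Sum.inl 1)) (hb (Sum.inl 3)) (by omega) c0 c1 c2
    have hT1 : ∑ j : Fin s, m (Sum.inr j) = 1 := by omega
    obtain ⟨j, -, hj⟩ := Finset.exists_ne_zero_of_sum_ne_zero hT0
    have hsp := Finset.add_sum_erase Finset.univ (fun j : Fin s => m (Sum.inr j)) (Finset.mem_univ j)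
    have hen : 0 ≤ ∑ j ∈ Finset.univ.erase j, m (Sum.inr j) := Finset.sum_nonneg fun j _ => hnn j
    have hjn := hnn j
    have he0 : ∑ j ∈ Finset.univ.erase j, m (Sum.inr j) = 0 := by omega
    have hj1 : m (Sum.inr j) = 1 := by omega
    have hz := (Finset.sum_eq_zero_iff_of_nonneg fun j _ => hnn j).mp he0
    refine ⟨Sum.inr j, ?_⟩
    ext (i | i)
    · fin_cases i <;> simp [h]
    · by_cases hij : i = j
      · subst hij; simp [hj1]
      · rw [Pi.single_eq_of_ne (by simpa using hij)]
        exact hz i (Finset.mem_erase.mpr ⟨hij, Finset.mem_univ i⟩)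

lemma gam_indep {s : ℕ} (N a K W : ℤ) (hN : 1 ≤ N) (ha : a = N + 2) (hK : K = a ^ 2)
    (hW : W = 6 * K * N + a * N + 6 * N) (hd : 4 ≤ d) (hsd : s + 3 ≤ d)
    (m : Fin 4 ⊕ Fin s → ℤ) (hm : ∑ j, m j = 0)
    (hc : ∑ j, m j • gam d s a K W j = 0) : m = 0 := by
  have hKp : 0 < K := by rw [hK, ha]; positivity
  have hWp : 2 + 2 * K < W := by rw [hW]; nlinarith
  have c0 := congrFun hc ⟨0, by omega⟩
  have c1 := congrFun hc ⟨1, by omega⟩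
  have c2 := congrFun hc ⟨2, by omega⟩
  have c3 := congrFun hc ⟨3, by omega⟩
  rw [gam_c0 _ _ _ _ hd] at c0
  rw [gam_c1 _ _ _ _ hd] at c1
  rw [gam_c2 _ _ _ _ hd] at c2
  rw [gam_c3 _ _ _ _ hd] at c3
  simp only [Pi.zero_apply] at c0 c1 c2 c3
  have hz : ∀ j : Fin s, j.val ≠ 0 → m (Sum.inr j) = 0 := by
    intro j hj
    have := congrFun hc ⟨j.val + 3, by omega⟩
    rw [gam_cj _ _ _ _ hsd j hj] at this
    rcases mul_eq_zero.mp this with h | h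
    · exact h
    · omega
  have hT : ∑ j : Fin s, m (Sum.inr j) = yy m := by
    unfold yy
    refine Finset.sum_congr rfl fun j _ => ?_
    split_ifs with h
    · rfl
    · exact hz j h
  rw [Fintype.sum_sum_type, Fin.sum_univ_four, hT] at hm
  have hy : yy m * (W - 2 - 2 * K) = 0 := by
    linear_combination c0 + c1 + c2 + c3 - (2 + 2 * K) * hm
  have hy0 : yy m = 0 := by
    rcases mul_eq_zero.mp hy with h | h
    · exact h
    · omega
  rw [hy0] at hm c3
  have hz2 : (2 * K) * (m (Sum.inl 2) + m (Sum.inl 3)) = 0 := by linear_combination c0 + c1 - hm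
  have hz3 : m (Sum.inl 2) = - m (Sum.inl 3) := by
    rcases mul_eq_zero.mp hz2 with h | h
    · omega
    · omega
  have hz4 : m (Sum.inl 0) = - m (Sum.inl 1) := by omega
  rw [hz3] at c0
  rw [hz4] at c2
  have hx : m (Sum.inl 1) * (1 - K) = 0 := by
    rw [hK] at *; linear_combination c0 + a * c2
  have hK1 : 1 < K := by rw [hK, ha]; nlinarith
  have hx0 : m (Sum.inl 1) = 0 := by
    rcases mul_eq_zero.mp hx with h | h
    · exact h
    · omega
  have hy3 : m (Sum.inl 3) = 0 := by rw [hx0] at c2; linarith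
  ext (i | j)
  · fin_cases i
    · simp; omega
    · simp; omega
    · simp; omega
    · simp; omega
  · simp only [Pi.zero_apply]
    by_cases hj : j.val = 0
    · rw [← yy_eq m j hj, hy0]
    · exact hz j hj

lemma gam_dim {s : ℕ} (N a K W : ℤ) (hN : 1 ≤ N) (ha : a = N + 2) (hK : K = a ^ 2)
    (hW : W = 6 * K * N + a * N + 6 * N) (hd : 4 ≤ d) (hsd : s + 3 ≤ d) :
    HasDim (Set.range (gam d s a K W)) (s + 3) := by
  rintro _ ⟨i₀, rfl⟩
  have haff : AffineIndependent ℤ (gam d s a K W) := by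
    rw [affineIndependent_iff]
    intro t w hw hwp i hi
    have h := gam_indep N a K W hN ha hK hW hd hsd (fun i => if i ∈ t then w i else 0)
      (by rw [Finset.sum_ite_mem, Finset.univ_inter]; exact hw)
      (by simp only [ite_smul, zero_smul]; rw [Finset.sum_ite_mem, Finset.univ_inter]; exact hwp)
    have := congrFun h i
    simpa [hi] using this
  rw [affineIndependent_iff_linearIndependent_vsub ℤ _ i₀] at haff
  have hspan : Submodule.span ℤ ((· - gam d s a K W i₀) '' Set.range (gam d s a K W)) =
      Submodule.span ℤ (Set.range fun i : {x // x ≠ i₀} => (gam d s a K W i -ᵥ gam d s a K W i₀ : Fin d → ℤ)) := by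
    apply le_antisymm
    · rw [Submodule.span_le]
      rintro _ ⟨_, ⟨i, rfl⟩, rfl⟩
      by_cases hi : i = i₀
      · subst hi; simp
      · exact Submodule.subset_span ⟨⟨i, hi⟩, rfl⟩
    · apply Submodule.span_mono
      rintro _ ⟨i, rfl⟩
      exact ⟨_, ⟨i, rfl⟩, rfl⟩
  rw [hspan, finrank_span_eq_card haff]
  simp
  omega

lemma gam_nn {s : ℕ} (N a K W : ℤ) (hN : 1 ≤ N) (ha : a = N + 2) (hK : K = a ^ 2)
    (hW : W = 6 * K * N + a * N + 6 * N) : Set.range (gam d s a K W) ⊆ NN d := by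
  have hKp : 0 < K := by rw [hK, ha]; positivity
  have hWp : 0 ≤ W := by rw [hW]; have : 0 < a := by omega
                         positivity
  have hKa : a ≤ K := by rw [hK, ha]; nlinarith
  rintro _ ⟨i | j, rfl⟩ c
  · simp only [gam]
    split_ifs
    all_goals first | (fin_cases i <;> simp <;> omega) | simp
  · simp only [gam]
    split_ifs
    · exact hWp
    · exact le_rfl

lemma gam_not_coset {s : ℕ} (N a K W : ℤ) (hN : 1 ≤ N) (ha : a = N + 2) (hK : K = a ^ 2)
    (hd : 4 ≤ d) :
    ¬ ∃ Λ : Set (Fin d → ℤ), IsCoset Λ ∧ Set.range (gam d s a K W) = Λ ∩ NN d := by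
  rintro ⟨Λ, ⟨x, H, rfl⟩, hΛ⟩
  have hmem : ∀ i, gam d s a K W i - x ∈ H := by
    intro i
    have : gam d s a K W i ∈ (x + ·) '' (H : Set (Fin d → ℤ)) ∩ NN d := hΛ ▸ ⟨i, rfl⟩
    obtain ⟨⟨y, hy, hyx⟩, -⟩ := this
    rw [← hyx]
    simpa using hy
  let m : Fin 4 ⊕ Fin s → ℤ := Sum.elim ![1 - a, a, -1, 1] 0
  have hsum : ∑ i, m i = 1 := by
    rw [Fintype.sum_sum_type, Fin.sum_univ_four]; simp [m]
  have hyy : yy m = 0 := by unfold yy; simp [m]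
  let v := ∑ i, m i • gam d s a K W i
  have hv0 : v ⟨0, by omega⟩ = 0 := by
    simp only [v]; rw [gam_c0 _ _ _ _ hd]; simp [m]; ring
  have hv1 : v ⟨1, by omega⟩ = 1 := by
    simp only [v]; rw [gam_c1 _ _ _ _ hd]; simp [m]; ring
  have hv2 : v ⟨2, by omega⟩ = 1 := by
    simp only [v]; rw [gam_c2 _ _ _ _ hd]; simp [m, hK]; ring
  have hv3 : v ⟨3, by omega⟩ = 2 * a ^ 2 := by
    simp only [v]; rw [gam_c3 _ _ _ _ hd, hyy]; simp [m, hK]; ring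
  have hvn : v ∈ NN d := by
    intro c
    by_cases h0 : c.val = 0
    · rw [show c = ⟨0, by omega⟩ from Fin.ext h0, hv0]
    by_cases h1 : c.val = 1
    · rw [show c = ⟨1, by omega⟩ from Fin.ext h1, hv1]; norm_num
    by_cases h2 : c.val = 2
    · rw [show c = ⟨2, by omega⟩ from Fin.ext h2, hv2]; norm_num
    by_cases h3 : c.val = 3
    · rw [show c = ⟨3, by omega⟩ from Fin.ext h3, hv3]; positivity
    simp only [v]
    rw [gam_coord]
    simp [gam, h0, h1, h2, h3, m]
  have hvx : v - x ∈ H := by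
    have : v - x = ∑ i, m i • (gam d s a K W i - x) := by
      simp only [smul_sub, Finset.sum_sub_distrib, ← Finset.sum_smul, hsum, one_smul, v]
    rw [this]
    exact sum_mem fun i _ => H.zsmul_mem (hmem i) _
  have hvr : v ∈ Set.range (gam d s a K W) := by
    rw [hΛ]
    exact ⟨⟨v - x, hvx, by simp⟩, hvn⟩
  have hK9 : a < K := by rw [hK, ha]; nlinarith
  obtain ⟨i | j, hi⟩ := hvr
  · rw [← hi] at hv0 hv1 hv2
    fin_cases i <;> simp [gam] at hv0 hv1 hv2 <;> omega
  · rw [← hi] at hv1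
    simp [gam] at hv1

lemma part_two {k : ℕ} (hd : 4 ≤ d) (hk : 3 ≤ k) (hkd : k ≤ d) (N : ℕ) (hN : 0 < N) :
    ¬ ContractiveRestrictionProperty d (2 * N) k := by
  obtain ⟨s, rfl⟩ : ∃ s, k = s + 3 := ⟨k - 3, by omega⟩
  intro h
  have hN1 : (1:ℤ) ≤ N := by exact_mod_cast hN
  obtain ⟨a, ha⟩ : ∃ a : ℤ, a = N + 2 := ⟨_, rfl⟩
  obtain ⟨K, hK⟩ : ∃ K : ℤ, K = a ^ 2 := ⟨_, rfl⟩
  obtain ⟨W, hW⟩ : ∃ W : ℤ, W = 6 * K * N + a * N + 6 * N := ⟨_, rfl⟩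
  refine gam_not_coset (s := s) N a K W hN1 ha hK hd (h _ (Set.range_nonempty _)
    (gam_nn N a K W hN1 ha hK hW) (gam_dim N a K W hN1 ha hK hW hd hkd) ?_)
  exact contractive_of_closure _ N hN (gam_closure N a K W hN1 ha hK hW hd hkd)

end Example

/-- Theorem 2 (c): if `d ≥ 4` and `3 ≤ k ≤ d`, then `H^p(𝕋^d)` enjoys the contractive
restriction property of dimension `k` iff `p` is not an even integer. -/
theorem contractive_restriction_property_c (d k : ℕ) (hd : 4 ≤ d) (hk : 3 ≤ k)
    (hkd : k ≤ d) (p : ℝ≥0∞) (hp : 1 ≤ p) :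
    ContractiveRestrictionProperty d p k ↔ ¬ ∃ m : ℕ, 0 < m ∧ p = 2 * m := by
  constructor
  · rintro h ⟨m, hm, rfl⟩
    exact part_two hd hk hkd m hm h
  · intro h
    exact part_one hp h k

end
end

section
/- Fix an integer n ≥ 1. There exists a ℂ-linear map T from the space of analytic polynomials on 𝕋^∞ to itself such that for every 1 ≤ p ≤ ∞ the following holds: there exists a constant C ≥ 0 with ‖Tf‖_p ≤ C‖f‖_p for all analytic polynomials f on 𝕋^∞ if and only if p ∈ {2, 4, ..., 2(n+1)}. -/
open MeasureTheory
open scoped ENNReal NNReal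

noncomputable section

/-- The infinite-dimensional torus `𝕋^∞`, modelled as a countable product of `ℝ/ℤ`. -/
abbrev TorusInf := ℕ → AddCircle (1 : ℝ)

/-- The Haar probability measure `m_∞` on the infinite-dimensional torus. -/
def haarTorusInf : Measure TorusInf :=
  Measure.addHaarMeasure (⊤ : TopologicalSpace.PositiveCompacts TorusInf)

/-- Evaluation of an analytic polynomial on `𝕋^∞`, given by its finitely supported
family of coefficients `c` indexed by multi-indices `α ∈ ℕ₀^{(∞)}`, as the function
`z ↦ ∑_α c_α z^α`. -/
def evalAPoly (c : (ℕ →₀ ℕ) →₀ ℂ) (z : TorusInf) : ℂ :=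
  ∑ α ∈ c.support, c α * ∏ j ∈ α.support, fourier ((α j : ℤ)) (z j)

namespace EvenOp

section


/-- frequency pattern -/
def pat (n k r : ℕ) : ℕ :=
  if k = 0 then 1 else if k = n + 2 then (if r = 0 then n + 2 else 0)
  else if r = k then n + 2 else 0

/-- variable index -/
def idx (N i r : ℕ) : ℕ := Nat.pair N (Nat.pair i r)

lemma idx_inj {N i r N' i' r' : ℕ} : idx N i r = idx N' i' r' ↔ N = N' ∧ i = i' ∧ r = r' := by
  simp [idx]

lemma exists_idx (j : ℕ) : ∃ N i r, j = idx N i r :=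
  ⟨j.unpair.1, j.unpair.2.unpair.1, j.unpair.2.unpair.2, by simp [idx]⟩

/-- multi-index -/
noncomputable def vec (n N : ℕ) (l : ℕ → ℕ) : ℕ →₀ ℕ :=
  ∑ i ∈ Finset.range N, ∑ r ∈ Finset.range (n + 2), Finsupp.single (idx N i r) (pat n (l i) r)

lemma vec_apply (n N : ℕ) (l : ℕ → ℕ) (N' i r : ℕ) :
    vec n N l (idx N' i r) = if N = N' ∧ i < N' ∧ r < n + 2 then pat n (l i) r else 0 := by
  unfold vec
  simp only [Finsupp.finsetSum_apply, Finsupp.single_apply, idx_inj]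
  by_cases h : N = N'
  · subst h
    simp only [true_and]
    by_cases hi : i < N
    · rw [Finset.sum_eq_single i]
      · by_cases hr : r < n + 2
        · rw [Finset.sum_eq_single r]
          · simp [hi, hr]
          · intro b _ hb; simp [hb]
          · intro hb; simp at hb; omega
        · rw [Finset.sum_eq_zero]
          · simp [hr]
          · intro b hb
            rw [Finset.mem_range] at hb
            rw [if_neg]; omega
      · intro b _ hb; simp [hb]
      · intro hb; simp at hb; omega
    · rw [Finset.sum_eq_zero]
      · simp [hi]
      · intro b hb
        rw [Finset.mem_range] at hb
        apply Finset.sum_eq_zero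
        intro c _
        rw [if_neg]; omega
  · simp [h]

/-- The frequency set. -/
def Lam (n : ℕ) : Set (ℕ →₀ ℕ) :=
  {α | ∃ N, 1 ≤ N ∧ ∃ l : ℕ → ℕ, (∀ i, l i < n + 2) ∧ α = vec n N l}

lemma int_sum_one (s : Finset ℕ) (δ : ℕ → ℤ) (h0 : ∀ x ∈ s, 0 ≤ δ x) (h1 : ∑ x ∈ s, δ x = 1) :
    ∃ x₀ ∈ s, δ x₀ = 1 ∧ ∀ x ∈ s, x ≠ x₀ → δ x = 0 := by
  have : ∃ x₀ ∈ s, δ x₀ ≠ 0 := by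
    by_contra! h
    rw [Finset.sum_eq_zero h] at h1
    omega
  obtain ⟨x₀, hx, hne⟩ := this
  have h2 := Finset.add_sum_erase s δ hx
  have h3 : 0 ≤ ∑ x ∈ s.erase x₀, δ x :=
    Finset.sum_nonneg fun i hi => h0 i (Finset.mem_of_mem_erase hi)
  have h4 := h0 x₀ hx
  have h5 : δ x₀ = 1 := by omega
  refine ⟨x₀, hx, h5, fun x hxs hxx => ?_⟩
  have h6 : ∑ x ∈ s.erase x₀, δ x = 0 := by omega
  rw [Finset.sum_eq_zero_iff_of_nonneg (fun i hi => h0 i (Finset.mem_of_mem_erase hi))] at h6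
  exact h6 x (Finset.mem_erase.2 ⟨hxx, hxs⟩)

lemma pat_sum (n k : ℕ) (hk : k < n + 2) : ∑ r ∈ Finset.range (n + 2), pat n k r = n + 2 := by
  unfold pat
  by_cases h : k = 0
  · simp [h]
  · have : k ≠ n + 2 := by omega
    simp [h, this, hk]

lemma comb (n m : ℕ) (hm : m ≤ n) (α : ℕ →₀ ℕ) (lam : Fin (m + 1) → ℕ →₀ ℕ)
    (mu : Fin m → ℕ →₀ ℕ) (hl : ∀ t, lam t ∈ Lam n) (hmu : ∀ t, mu t ∈ Lam n)
    (h : α + ∑ t, mu t = ∑ t, lam t) : α ∈ Lam n := by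
  choose P hP1 p hp hpe using hl
  choose M hM1 q hq hqe using hmu
  have key : ∀ N i r, (α (idx N i r) : ℤ) =
      ∑ t, (if P t = N ∧ i < N ∧ r < n + 2 then (pat n (p t i) r : ℤ) else 0)
      - ∑ t, (if M t = N ∧ i < N ∧ r < n + 2 then (pat n (q t i) r : ℤ) else 0) := by
    intro N i r
    have := DFunLike.congr_fun h (idx N i r)
    simp only [Finsupp.add_apply, Finsupp.finsetSum_apply, hpe, hqe, vec_apply] at this
    have h' : ((α (idx N i r) + ∑ t, (if M t = N ∧ i < N ∧ r < n + 2 then (pat n (q t i) r) else 0) : ℕ) : ℤ) = ((∑ t, (if P t = N ∧ i < N ∧ r < n + 2 then (pat n (p t i) r) else 0) : ℕ) : ℤ) := by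
      exact_mod_cast this
    push_cast at h'
    linarith
  set c : ℕ → ℤ := fun N => ∑ t, (if P t = N then (1 : ℤ) else 0) - ∑ t, (if M t = N then (1 : ℤ) else 0) with hc
  have deg : ∀ N i, i < N → ∑ r ∈ Finset.range (n + 2), (α (idx N i r) : ℤ) = (n + 2) * c N := by
    intro N i hi
    simp only [key, hc]
    rw [Finset.sum_sub_distrib, Finset.sum_comm, mul_sub, Finset.mul_sum, Finset.mul_sum]
    congr 1
    · apply Finset.sum_congr rfl
      intro t _
      by_cases hN : P t = N
      · have := pat_sum n (p t i) (hp t i)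
        simp only [hN, hi, true_and, if_true, mul_one]
        rw [Finset.sum_congr rfl (g := fun r => (pat n (p t i) r : ℤ))]
        · exact_mod_cast this
        · intro r hr; rw [Finset.mem_range] at hr; simp [hr]
      · simp [hN]
    · rw [Finset.sum_comm]
      apply Finset.sum_congr rfl
      intro t _
      by_cases hN : M t = N
      · have := pat_sum n (q t i) (hq t i)
        simp only [hN, hi, true_and, if_true, mul_one]
        rw [Finset.sum_congr rfl (g := fun r => (pat n (q t i) r : ℤ))]
        · exact_mod_cast this
        · intro r hr; rw [Finset.mem_range] at hr; simp [hr]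
      · simp [hN]
  have c_nonneg : ∀ N, 0 ≤ c N := by
    intro N
    rcases Nat.eq_zero_or_pos N with h0 | h0
    · subst h0
      have h1 : ∀ t, P t ≠ 0 := fun t => by have := hP1 t; omega
      have h2 : ∀ t, M t ≠ 0 := fun t => by have := hM1 t; omega
      simp [hc, h1, h2]
    · have := deg N 0 h0
      have h2 : (0 : ℤ) ≤ (n + 2) * c N := by rw [← this]; positivity
      exact nonneg_of_mul_nonneg_right h2 (by positivity)
  set s : Finset ℕ := (Finset.univ.image P) ∪ (Finset.univ.image M) with hs
  have csum : ∑ N ∈ s, c N = 1 := by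
    simp only [hc]
    rw [Finset.sum_sub_distrib, Finset.sum_comm]
    have e1 : ∀ t, ∑ N ∈ s, (if P t = N then (1 : ℤ) else 0) = 1 := fun t => by
      rw [Finset.sum_ite_eq, if_pos]
      simp [hs]
    have e2 : ∀ t, ∑ N ∈ s, (if M t = N then (1 : ℤ) else 0) = 1 := fun t => by
      rw [Finset.sum_ite_eq, if_pos]
      simp [hs]
    rw [Finset.sum_comm (s := s)]
    simp only [e1, e2]
    simp
  obtain ⟨N₀, hN₀, hc1, hc0⟩ := int_sum_one s c (fun x _ => c_nonneg x) csum
  have hc0' : ∀ N, N ≠ N₀ → c N = 0 := by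
    intro N hN
    by_cases hNs : N ∈ s
    · exact hc0 N hNs hN
    · have h1 : ∀ t, P t ≠ N := fun t ht => hNs (by simp [hs, ← ht])
      have h2 : ∀ t, M t ≠ N := fun t ht => hNs (by simp [hs, ← ht])
      simp [hc, h1, h2]
  have hN1 : 1 ≤ N₀ := by
    simp only [hs, Finset.mem_union, Finset.mem_image, Finset.mem_univ, true_and] at hN₀
    rcases hN₀ with ⟨t, ht⟩ | ⟨t, ht⟩
    · rw [← ht]; exact hP1 t
    · rw [← ht]; exact hM1 t
  have block : ∀ i, ∃ k < n + 2, i < N₀ → ∀ r < n + 2, α (idx N₀ i r) = pat n k r := by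
    intro i
    by_cases hi : i < N₀
    swap
    · exact ⟨0, by omega, fun h => absurd h hi⟩
    set w : ℕ → ℤ := fun k => ∑ t, (if P t = N₀ ∧ p t i = k then (1 : ℤ) else 0)
      - ∑ t, (if M t = N₀ ∧ q t i = k then (1 : ℤ) else 0) with hw
    have wsum : ∑ k ∈ Finset.range (n + 2), w k = 1 := by
      rw [← hc1]
      simp only [hw, hc]
      rw [Finset.sum_sub_distrib, Finset.sum_comm]
      congr 1
      · apply Finset.sum_congr rfl
        intro t _
        have := hp t i
        by_cases hN : P t = N₀ <;> simp [hN, this]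
      · rw [Finset.sum_comm]
        apply Finset.sum_congr rfl
        intro t _
        have := hq t i
        by_cases hN : M t = N₀ <;> simp [hN, this]
    have pat_eq : ∀ k r, k < n + 2 → (pat n k r : ℤ) =
        (if k = 0 then 1 else 0) + (n + 2) * (if r = 0 then 0 else if k = r then 1 else 0) := by
      intro k r hk
      unfold pat
      have : k ≠ n + 2 := by omega
      by_cases h1 : k = 0
      · subst h1
        by_cases h2 : r = 0
        · simp [h2]
        · have : 0 ≠ r := by omega
          simp [h2, this]
      · by_cases h2 : r = k
        · subst h2; simp [h1, this]
        · have h3 : k ≠ r := by omega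
          simp [h1, this, h2, h3]
    have val : ∀ r < n + 2, (α (idx N₀ i r) : ℤ) = w 0 + (n + 2) * (if r = 0 then 0 else w r) := by
      intro r hr
      rw [key]
      have e1 : ∀ t, (if P t = N₀ ∧ i < N₀ ∧ r < n + 2 then (pat n (p t i) r : ℤ) else 0) =
          (if P t = N₀ ∧ p t i = 0 then (1 : ℤ) else 0) +
          (n + 2) * (if r = 0 then 0 else if P t = N₀ ∧ p t i = r then (1 : ℤ) else 0) := by
        intro t
        rw [pat_eq _ _ (hp t i)]
        by_cases hN : P t = N₀ <;> simp [hN, hi, hr]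
      have e2 : ∀ t, (if M t = N₀ ∧ i < N₀ ∧ r < n + 2 then (pat n (q t i) r : ℤ) else 0) =
          (if M t = N₀ ∧ q t i = 0 then (1 : ℤ) else 0) +
          (n + 2) * (if r = 0 then 0 else if M t = N₀ ∧ q t i = r then (1 : ℤ) else 0) := by
        intro t
        rw [pat_eq _ _ (hq t i)]
        by_cases hN : M t = N₀ <;> simp [hN, hi, hr]
      rw [Finset.sum_congr rfl (fun t _ => e1 t), Finset.sum_congr rfl (fun t _ => e2 t),
        Finset.sum_add_distrib, Finset.sum_add_distrib, ← Finset.mul_sum, ← Finset.mul_sum]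
      simp only [hw]
      by_cases h0 : r = 0
      · simp [h0]
      · simp only [h0, if_false]; ring
    have w0 : 0 ≤ w 0 := by
      have := val 0 (by omega)
      simp at this
      omega
    have w0' : w 0 ≤ n + 1 := by
      have h1 : ∑ t, (if P t = N₀ ∧ p t i = 0 then (1 : ℤ) else 0) ≤ ∑ t : Fin (m + 1), (1 : ℤ) :=
        Finset.sum_le_sum fun t _ => by split_ifs <;> simp
      have h2 : 0 ≤ ∑ t, (if M t = N₀ ∧ q t i = 0 then (1 : ℤ) else 0) :=
        Finset.sum_nonneg fun t _ => by split_ifs <;> simp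
      simp at h1
      simp only [hw]
      simp
      simp at h2
      omega
    have wnn : ∀ k ∈ Finset.range (n + 2), 0 ≤ w k := by
      intro k hk
      rw [Finset.mem_range] at hk
      by_cases h0 : k = 0
      · rw [h0]; exact w0
      · have := val k hk
        simp only [h0, if_false] at this
        have h2 : (0 : ℤ) ≤ α (idx N₀ i k) := by positivity
        by_contra! h3
        nlinarith
    obtain ⟨k, hk, hk1, hk0⟩ := int_sum_one _ w wnn wsum
    rw [Finset.mem_range] at hk
    refine ⟨k, hk, fun _ r hr => ?_⟩
    have h1 := val r hr
    have h2 := pat_eq k r hk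
    have h3 : w 0 = if k = 0 then 1 else 0 := by
      split_ifs with h
      · rw [← h]; exact hk1
      · exact hk0 0 (by simp) (by omega)
    have h4 : r ≠ 0 → w r = if k = r then 1 else 0 := by
      intro _
      split_ifs with h
      · rw [← h]; exact hk1
      · exact hk0 r (by simpa using hr) (by omega)
    have : (α (idx N₀ i r) : ℤ) = pat n k r := by
      rw [h1, h2, h3]
      by_cases h0 : r = 0
      · simp [h0]
      · simp only [h0, if_false]; rw [h4 h0]
    exact_mod_cast this
  choose l hl1 hl2 using block
  refine ⟨N₀, hN1, l, hl1, ?_⟩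
  ext j
  obtain ⟨N, i, r, rfl⟩ := exists_idx j
  rw [vec_apply]
  split_ifs with hh
  · obtain ⟨rfl, hi, hr⟩ := hh
    exact hl2 i hi r hr
  · by_cases hir : i < N ∧ r < n + 2
    · have hN : N ≠ N₀ := fun h => hh ⟨h.symm, hir⟩
      have := deg N i hir.1
      rw [hc0' N hN, mul_zero] at this
      rw [Finset.sum_eq_zero_iff_of_nonneg (fun _ _ => by positivity)] at this
      exact_mod_cast this r (Finset.mem_range.2 hir.2)
    · have := key N i r
      have h1 : ∀ x, ¬ (x = N ∧ i < N ∧ r < n + 2) := fun x hx => hir hx.2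
      simp only [h1, if_false, Finset.sum_const_zero, sub_zero] at this
      exact_mod_cast this


end

section


instance : Measure.IsAddHaarMeasure haarTorusInf := by
  unfold haarTorusInf; infer_instance

instance : IsProbabilityMeasure haarTorusInf := ⟨by
  have := Measure.addHaarMeasure_self (K₀ := (⊤ : TopologicalSpace.PositiveCompacts TorusInf))
  simpa [haarTorusInf] using this⟩

/-- characters -/
def chi (α : ℕ →₀ ℕ) : C(TorusInf, ℂ) where
  toFun z := ∏ j ∈ α.support, fourier ((α j : ℤ)) (z j)
  continuous_toFun := by fun_prop

lemma chi_eq (α : ℕ →₀ ℕ) (z : TorusInf) :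
    chi α z = α.prod fun j m => (fourier (m : ℤ) (z j) : ℂ) := rfl

lemma chi_zero : chi 0 = 1 := by
  ext z; simp [chi_eq]

lemma chi_add (α β : ℕ →₀ ℕ) : chi (α + β) = chi α * chi β := by
  ext z
  simp only [chi_eq, ContinuousMap.mul_apply]
  rw [Finsupp.prod_add_index']
  · intro j; simp
  · intro j a b; push_cast; exact fourier_add

lemma chi_single (j m : ℕ) (z : TorusInf) :
    chi (Finsupp.single j m) z = fourier (m : ℤ) (z j) := by
  rw [chi_eq, Finsupp.prod_single_index]; simp

lemma chi_sum {ι : Type*} (s : Finset ι) (α : ι → ℕ →₀ ℕ) :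
    chi (∑ i ∈ s, α i) = ∏ i ∈ s, chi (α i) := by
  classical
  induction s using Finset.induction_on with
  | empty => simp [chi_zero]
  | insert a s ha ih => rw [Finset.sum_insert ha, Finset.prod_insert ha, chi_add, ih]

lemma fourier_add_right (m : ℤ) (x y : AddCircle (1 : ℝ)) :
    fourier m (x + y) = (fourier m x : ℂ) * fourier m y := by
  simp [fourier_apply, smul_add, AddCircle.toCircle_add]

lemma chi_trans (α : ℕ →₀ ℕ) (z t : TorusInf) : chi α (z + t) = chi α z * chi α t := by
  simp only [chi, ContinuousMap.coe_mk, Pi.add_apply, fourier_add_right, Finset.prod_mul_distrib]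

lemma norm_chi (α : ℕ →₀ ℕ) (z : TorusInf) : ‖chi α z‖ = 1 := by
  simp only [chi, ContinuousMap.coe_mk, norm_prod, fourier_apply, Circle.norm_coe,
    Finset.prod_const_one]

lemma exists_fourier_ne (m : ℤ) (hm : m ≠ 0) : ∃ t : AddCircle (1 : ℝ), (fourier m t : ℂ) = -1 := by
  refine ⟨((1 / 2 / m : ℝ) : AddCircle (1 : ℝ)), ?_⟩
  have := fourier_add_half_inv_index (T := (1 : ℝ)) hm zero_lt_one 0
  simpa using this

lemma orth (α β : ℕ →₀ ℕ) (h : α ≠ β) :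
    ∫ z, chi α z * (starRingEnd ℂ) (chi β z) ∂haarTorusInf = 0 := by
  obtain ⟨j, hj⟩ : ∃ j, α j ≠ β j := by
    by_contra! h'; exact h (Finsupp.ext h')
  obtain ⟨t, ht⟩ := exists_fourier_ne ((α j : ℤ) - β j) (by omega)
  set T : TorusInf := Pi.single j t with hT
  have hchi : ∀ γ : ℕ →₀ ℕ, chi γ T = fourier (γ j : ℤ) t := by
    intro γ
    rw [chi_eq, Finsupp.prod]
    by_cases hs : j ∈ γ.support
    · rw [Finset.prod_eq_single j]
      · simp [hT]
      · intro b _ hb; simp [hT, hb]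
      · intro h; exact absurd hs h
    · have : γ j = 0 := by simpa using hs
      rw [this, Finset.prod_eq_one]
      · simp
      · intro b hb
        have : b ≠ j := fun h => hs (h ▸ hb)
        simp [hT, this]
  have hval : chi α T * (starRingEnd ℂ) (chi β T) = -1 := by
    rw [hchi, hchi, ← ht, sub_eq_add_neg, fourier_add, fourier_neg]
  have h1 := integral_add_right_eq_self (μ := haarTorusInf)
    (fun z => chi α z * (starRingEnd ℂ) (chi β z)) T
  have h2 : ∀ z, chi α (z + T) * (starRingEnd ℂ) (chi β (z + T)) =
      (chi α z * (starRingEnd ℂ) (chi β z)) * (-1) := by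
    intro z
    rw [← hval, chi_trans, chi_trans, map_mul]; ring
  simp only [h2] at h1
  rw [integral_mul_const] at h1
  have h3 := congrArg (fun x : ℂ => x / 2) h1
  linear_combination (-1 : ℂ) / 2 * h1

lemma cint (f : C(TorusInf, ℂ)) : Integrable f haarTorusInf :=
  f.continuous.integrable_of_hasCompactSupport (HasCompactSupport.of_compactSpace _)

/-- span of characters -/
def V (S : Set (ℕ →₀ ℕ)) : Submodule ℂ C(TorusInf, ℂ) := Submodule.span ℂ (Set.image chi S)

lemma V_orth (S S' : Set (ℕ →₀ ℕ)) (h : Disjoint S S') (f g : C(TorusInf, ℂ)) (hf : f ∈ V S)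
    (hg : g ∈ V S') : ∫ z, f z * (starRingEnd ℂ) (g z) ∂haarTorusInf = 0 := by
  have hi : ∀ a b : C(TorusInf, ℂ), Integrable (fun z => a z * (starRingEnd ℂ) (b z)) haarTorusInf :=
    fun a b => cint (a * star b)
  unfold V at hf hg
  induction hf using Submodule.span_induction with
  | zero => simp
  | add a b _ _ ha hb =>
    simp only [ContinuousMap.add_apply, add_mul]
    rw [integral_add (hi _ _) (hi _ _), ha, hb, add_zero]
  | smul c a _ ha =>
    simp only [ContinuousMap.smul_apply, smul_eq_mul, mul_assoc]
    rw [integral_const_mul, ha, mul_zero]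
  | mem f hf =>
    obtain ⟨α, hα, rfl⟩ := hf
    induction hg using Submodule.span_induction with
    | zero => simp
    | add a b _ _ ha hb =>
      simp only [ContinuousMap.add_apply, map_add, mul_add]
      rw [integral_add (hi _ _) (hi _ _), ha, hb, add_zero]
    | smul c a _ ha =>
      simp only [ContinuousMap.smul_apply, smul_eq_mul, map_mul, mul_left_comm _ ((starRingEnd ℂ) c)]
      rw [integral_const_mul, ha, mul_zero]
    | mem f hf =>
      obtain ⟨β, hβ, rfl⟩ := hf
      exact orth α β fun h' => Set.disjoint_left.1 h hα (h' ▸ hβ)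

/-- sumset -/
def sums (S : Set (ℕ →₀ ℕ)) (k : ℕ) : Set (ℕ →₀ ℕ) :=
  {α | ∃ l : Fin k → ℕ →₀ ℕ, (∀ t, l t ∈ S) ∧ α = ∑ t, l t}

lemma V_mul (S S' S3 : Set (ℕ →₀ ℕ)) (h : ∀ a ∈ S, ∀ b ∈ S', a + b ∈ S3)
    (f g : C(TorusInf, ℂ)) (hf : f ∈ V S) (hg : g ∈ V S') : f * g ∈ V S3 := by
  have := Submodule.mul_mem_mul hf hg
  unfold V at this
  rw [Submodule.span_mul_span] at this
  refine Submodule.span_mono ?_ this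
  rintro _ ⟨_, ⟨a, ha, rfl⟩, _, ⟨b, hb, rfl⟩, rfl⟩
  exact ⟨a + b, h a ha b hb, chi_add a b⟩

lemma V_pow (S : Set (ℕ →₀ ℕ)) (f : C(TorusInf, ℂ)) (hf : f ∈ V S) (k : ℕ) :
    f ^ k ∈ V (sums S k) := by
  induction k with
  | zero =>
    rw [pow_zero, ← chi_zero]
    exact Submodule.subset_span ⟨0, ⟨fun _ => 0, fun t => t.elim0, by simp⟩, rfl⟩
  | succ k ih =>
    rw [pow_succ]
    refine V_mul _ _ _ ?_ _ _ ih hf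
    rintro _ ⟨l, hl, rfl⟩ b hb
    refine ⟨Fin.snoc l b, ?_, ?_⟩
    · intro t
      refine Fin.lastCases ?_ (fun i => ?_) t <;> simp [hb, hl]
    · simp [Fin.sum_univ_castSucc]

/-- evaluation as a continuous function -/
def ev (c : (ℕ →₀ ℕ) →₀ ℂ) : C(TorusInf, ℂ) := ∑ α ∈ c.support, c α • chi α

lemma evalAPoly_eq (c : (ℕ →₀ ℕ) →₀ ℂ) : evalAPoly c = ev c := by
  funext z
  simp [evalAPoly, ev, chi]

lemma ev_lin (c : (ℕ →₀ ℕ) →₀ ℂ) : ev c = Finsupp.linearCombination ℂ chi c := by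
  rw [Finsupp.linearCombination_apply]; rfl

lemma ev_mem (c : (ℕ →₀ ℕ) →₀ ℂ) (S : Set (ℕ →₀ ℕ)) (h : ∀ α ∈ c.support, α ∈ S) :
    ev c ∈ V S :=
  Submodule.sum_mem _ fun α hα => Submodule.smul_mem _ _ (Submodule.subset_span ⟨α, h α hα, rfl⟩)

open Classical in
/-- The operator. -/
def opT (n : ℕ) : ((ℕ →₀ ℕ) →₀ ℂ) →ₗ[ℂ] ((ℕ →₀ ℕ) →₀ ℂ) where
  toFun c := c.filter (fun α => α ∈ Lam n)
  map_add' _ _ := Finsupp.filter_add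
  map_smul' _ _ := Finsupp.filter_smul

lemma young (k : ℕ) (x y : ℝ) (hx : 0 ≤ x) (hy : 0 ≤ y) :
    y ^ (k + 1) + (k + 1) * (x * y ^ k - y ^ (k + 1)) ≤ x ^ (k + 1) := by
  induction k with
  | zero => simp
  | succ k ih =>
    have h1 := mul_le_mul_of_nonneg_left ih hx
    have h2 : 0 ≤ (k + 1) * y ^ k * (x - y) ^ 2 := by positivity
    push_cast
    have e1 : x ^ (k + 1 + 1) = x * x ^ (k + 1) := by ring
    rw [e1]
    refine le_trans ?_ h1
    have : x * (y ^ (k + 1) + (k + 1) * (x * y ^ k - y ^ (k + 1))) -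
      (y ^ (k + 1 + 1) + (↑k + 1 + 1) * (x * y ^ (k + 1) - y ^ (k + 1 + 1))) =
      (k + 1) * y ^ k * (x - y) ^ 2 := by ring
    linarith

lemma upper_int (n m : ℕ) (hm : m ≤ n) (c : (ℕ →₀ ℕ) →₀ ℂ) :
    ∫ z, ‖ev (opT n c) z‖ ^ (2 * m + 2) ∂haarTorusInf ≤
      ∫ z, ‖ev c z‖ ^ (2 * m + 2) ∂haarTorusInf := by
  classical
  set f := ev c with hf
  set g := ev (opT n c) with hg
  have hgV : g ∈ V (Lam n) := by
    refine ev_mem _ _ fun α hα => ?_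
    simp only [opT, LinearMap.coe_mk, AddHom.coe_mk, Finsupp.support_filter, Finset.mem_filter] at hα
    exact hα.2
  have hd : f - g ∈ V (Lam n)ᶜ := by
    have : f - g = ev (c.filter (fun α => ¬ α ∈ Lam n)) := by
      rw [sub_eq_iff_eq_add, hf, hg, ev_lin, ev_lin, ev_lin, ← map_add]
      congr 1
      rw [add_comm]
      exact (Finsupp.filter_add_filter_not c _).symm
    rw [this]
    refine ev_mem _ _ fun α hα => ?_
    simp only [Finsupp.support_filter, Finset.mem_filter] at hα
    exact hα.2
  have h0 : ∫ z, ((f - g) * g ^ m) z * (starRingEnd ℂ) ((g ^ (m + 1)) z) ∂haarTorusInf = 0 := by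
    refine V_orth {γ | ∃ a ∈ (Lam n)ᶜ, ∃ b ∈ sums (Lam n) m, γ = a + b} (sums (Lam n) (m + 1)) ?_ _ _
      (V_mul (Lam n)ᶜ (sums (Lam n) m) _ ?_ _ _ hd (V_pow _ _ hgV m)) (V_pow _ _ hgV _)
    swap
    · exact fun a ha b hb => ⟨a, ha, b, hb, rfl⟩
    rw [Set.disjoint_left]
    rintro _ ⟨a, ha, _, ⟨mu, hmu, rfl⟩, rfl⟩ ⟨lam, hlam, he⟩
    exact ha (comb n m hm a lam mu hlam hmu he)
  have hI : ∀ k : C(TorusInf, ℝ), Integrable k haarTorusInf := fun k =>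
    k.continuous.integrable_of_hasCompactSupport (HasCompactSupport.of_compactSpace _)
  have hpt : ∀ z, ‖g z‖ ^ (2 * m + 2) + (2 * m + 2) *
      (((f - g) * g ^ m) z * (starRingEnd ℂ) ((g ^ (m + 1)) z)).re ≤ ‖f z‖ ^ (2 * m + 2) := by
    intro z
    have hy := young (2 * m + 1) ‖f z‖ ‖g z‖ (norm_nonneg _) (norm_nonneg _)
    have e : ((f - g) * g ^ m) z * (starRingEnd ℂ) ((g ^ (m + 1)) z) =
       f z * (g z ^ m * (starRingEnd ℂ) (g z) ^ (m + 1)) - ((‖g z‖ ^ (2 * m + 2) : ℝ) : ℂ) := by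
      simp only [ContinuousMap.mul_apply, ContinuousMap.sub_apply, ContinuousMap.pow_apply, map_pow]
      have : ((‖g z‖ ^ (2 * m + 2) : ℝ) : ℂ) = (g z * (starRingEnd ℂ) (g z)) ^ (m + 1) := by
        rw [Complex.mul_conj, Complex.normSq_eq_norm_sq]; push_cast; ring
      rw [this]; ring
    have h2 : (f z * (g z ^ m * (starRingEnd ℂ) (g z) ^ (m + 1))).re ≤ ‖f z‖ * ‖g z‖ ^ (2 * m + 1) := by
      refine (Complex.re_le_norm _).trans (le_of_eq ?_)
      simp only [norm_mul, norm_pow, RCLike.norm_conj]; ring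
    rw [e, Complex.sub_re, Complex.ofReal_re]
    push_cast at hy
    have h3 : (0 : ℝ) ≤ 2 * m + 2 := by positivity
    have := mul_le_mul_of_nonneg_left h2 h3
    have e2 : 2 * m + 1 + 1 = 2 * m + 2 := by ring
    rw [e2] at hy
    linarith
  have hInt1 : Integrable (fun z => ‖g z‖ ^ (2 * m + 2)) haarTorusInf :=
    hI ⟨fun z => ‖g z‖ ^ (2 * m + 2), by fun_prop⟩
  have hInt2 : Integrable (fun z => ‖f z‖ ^ (2 * m + 2)) haarTorusInf :=
    hI ⟨fun z => ‖f z‖ ^ (2 * m + 2), by fun_prop⟩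
  have hInt3 : Integrable (fun z => ((f - g) * g ^ m) z * (starRingEnd ℂ) ((g ^ (m + 1)) z)) haarTorusInf :=
    cint (((f - g) * g ^ m) * star (g ^ (m + 1)))
  have hre : ∫ z, (((f - g) * g ^ m) z * (starRingEnd ℂ) ((g ^ (m + 1)) z)).re ∂haarTorusInf = 0 := by
    have := integral_re hInt3
    rw [h0] at this
    simpa using this
  have := integral_mono (μ := haarTorusInf) (hInt1.add (hInt3.re.const_mul (2 * m + 2 : ℝ))) hInt2 hpt
  have e3 := integral_add hInt1 (hInt3.re.const_mul (2 * m + 2 : ℝ))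
  rw [integral_const_mul] at e3
  simp only [RCLike.re_to_complex] at e3
  rw [hre] at e3
  simp only [Pi.add_apply, RCLike.re_to_complex] at this
  linarith

lemma upper (n m : ℕ) (hm : m ≤ n) (c : (ℕ →₀ ℕ) →₀ ℂ) :
    eLpNorm (evalAPoly (opT n c)) (2 * (m + 1 : ℕ)) haarTorusInf ≤
      eLpNorm (evalAPoly c) (2 * (m + 1 : ℕ)) haarTorusInf := by
  have hp0 : (2 * (m + 1 : ℕ) : ℝ≥0∞) ≠ 0 := by simp
  have hpt : (2 * (m + 1 : ℕ) : ℝ≥0∞) ≠ ∞ := ENNReal.mul_ne_top (by simp) (by simp)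
  have hreal : (2 * (m + 1 : ℕ) : ℝ≥0∞).toReal = ((2 * m + 2 : ℕ) : ℝ) := by
    rw [ENNReal.toReal_mul, ENNReal.toReal_natCast]; push_cast; simp; ring
  have key : ∀ f : C(TorusInf, ℂ), ∫⁻ z, ‖f z‖ₑ ^ ((2 * m + 2 : ℕ) : ℝ) ∂haarTorusInf =
      ENNReal.ofReal (∫ z, ‖f z‖ ^ (2 * m + 2) ∂haarTorusInf) := by
    intro f
    have hcont : Continuous fun z => ‖f z‖ ^ (2 * m + 2) := by fun_prop
    rw [ofReal_integral_eq_lintegral_ofReal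
      (hcont.integrable_of_hasCompactSupport (HasCompactSupport.of_compactSpace _))
      (Filter.Eventually.of_forall fun z => by positivity)]
    congr 1
    funext z
    rw [ENNReal.ofReal_pow (norm_nonneg _), ofReal_norm, ENNReal.rpow_natCast]
  rw [eLpNorm_eq_lintegral_rpow_enorm_toReal hp0 hpt, eLpNorm_eq_lintegral_rpow_enorm_toReal hp0 hpt,
    hreal, evalAPoly_eq, evalAPoly_eq, key, key]
  exact ENNReal.rpow_le_rpow (ENNReal.ofReal_le_ofReal (upper_int n m hm c)) (by positivity)


end

section


/-- truncated binomial series -/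
def tb (D : ℕ) (b : ℝ) (u : ℂ) : ℂ :=
  ∑ j ∈ Finset.range (D + 1), ((Ring.choose b j : ℝ) : ℂ) * u ^ j

lemma taylor1 (D : ℕ) (b : ℝ) :
    (fun u : ℂ => (1 + u) ^ (b : ℂ) - tb D b u) =O[nhds 0] fun u => ‖u‖ ^ (D + 1) := by
  have h := (Complex.one_add_cpow_hasFPowerSeriesAt_zero (a := (b : ℂ))).isBigO_sub_partialSum_pow (D + 1)
  refine h.congr_left fun u => ?_
  simp only [zero_add, FormalMultilinearSeries.partialSum, tb, binomialSeries_apply, smul_eq_mul]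
  congr 1
  apply Finset.sum_congr rfl
  intro j _
  simp [Complex.ofReal_choose]

/-- the model function -/
def Phi (B : ℝ) (u : ℂ) : ℂ := (1 + u) ^ (B : ℂ) * (starRingEnd ℂ) ((1 + u) ^ ((B + 1 : ℝ) : ℂ))

lemma contAt_cpow (b : ℝ) : ContinuousAt (fun u : ℂ => (1 + u) ^ (b : ℂ)) 0 := by
  refine ContinuousAt.cpow (by fun_prop) (by fun_prop) ?_
  simp

lemma cont_tb (D : ℕ) (b : ℝ) : Continuous (tb D b) := by unfold tb; fun_prop

lemma taylor2 (D : ℕ) (B : ℝ) :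
    (fun u : ℂ => Phi B u - tb D B u * (starRingEnd ℂ) (tb D (B + 1) u)) =O[nhds 0]
      fun u => ‖u‖ ^ (D + 1) := by
  have h1 := taylor1 D B
  have h2 : (fun u : ℂ => (starRingEnd ℂ) ((1 + u) ^ ((B + 1 : ℝ) : ℂ)) - (starRingEnd ℂ) (tb D (B + 1) u))
      =O[nhds 0] fun u => ‖u‖ ^ (D + 1) := by
    refine Asymptotics.IsBigO.of_norm_left ?_
    refine (taylor1 D (B + 1)).norm_left.congr_left fun u => ?_
    rw [← map_sub, RCLike.norm_conj]
  have h3 : (fun u : ℂ => (starRingEnd ℂ) ((1 + u) ^ ((B + 1 : ℝ) : ℂ))) =O[nhds 0] fun _ => (1 : ℝ) :=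
    (Complex.continuous_conj.continuousAt.comp (contAt_cpow (B + 1))).isBigO_one ℝ
  have h4 : (fun u : ℂ => tb D B u) =O[nhds 0] fun _ => (1 : ℝ) :=
    (cont_tb D B).continuousAt.isBigO_one ℝ
  have h5 := h1.mul h3
  have h6 := h4.mul h2
  simp only [mul_one, one_mul] at h5 h6
  have := h5.add h6
  refine this.congr_left fun u => ?_
  unfold Phi; ring

lemma taylor3 (D : ℕ) (B : ℝ) : ∃ C > 0, ∃ δ > 0, ∀ u : ℂ, ‖u‖ ≤ δ →
    ‖Phi B u - tb D B u * (starRingEnd ℂ) (tb D (B + 1) u)‖ ≤ C * ‖u‖ ^ (D + 1) := by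
  obtain ⟨C, hC, h⟩ := (taylor2 D B).exists_pos
  rw [Asymptotics.isBigOWith_iff, Metric.eventually_nhds_iff] at h
  obtain ⟨δ, hδ, h⟩ := h
  refine ⟨C, hC, δ / 2, by positivity, fun u hu => ?_⟩
  have := h (y := u) (by simp; linarith)
  simpa using this

lemma Phi_eq (B : ℝ) (u : ℂ) (hu : 1 + u ≠ 0) :
    Phi B u = ((Complex.normSq (1 + u) ^ B : ℝ) : ℂ) * (starRingEnd ℂ) (1 + u) := by
  unfold Phi
  set c := 1 + u
  have e : c ^ ((B + 1 : ℝ) : ℂ) = c ^ (B : ℂ) * c := by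
    push_cast; rw [Complex.cpow_add _ _ hu, Complex.cpow_one]
  rw [e, map_mul, ← mul_assoc, Complex.mul_conj, Complex.normSq_eq_norm_sq,
    Complex.normSq_eq_norm_sq, Complex.norm_cpow_real]
  congr 2
  rw [← Real.rpow_natCast, ← Real.rpow_natCast, ← Real.rpow_mul (norm_nonneg _),
    ← Real.rpow_mul (norm_nonneg _)]
  congr 1; push_cast; ring

section
variable {X : Type*} [TopologicalSpace X] [CompactSpace X] [MeasurableSpace X] [BorelSpace X]
  (μ : Measure X) [IsProbabilityMeasure μ]

lemma cintX {E : Type*} [NormedAddCommGroup E] [SecondCountableTopologyEither X E] (f : X → E) (hf : Continuous f) : Integrable f μ :=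
  hf.integrable_of_hasCompactSupport (HasCompactSupport.of_compactSpace _)

lemma main_moment (D : ℕ) (B : ℝ) (S q : C(X, ℂ))
    (hmom : ∀ j l, j ≤ D → j ≠ l + D → ∫ y, q y * S y ^ j * (starRingEnd ℂ) (S y) ^ l ∂μ = 0)
    (x : ℝ) :
    ∫ y, q y * (tb D B (x * S y) * (starRingEnd ℂ) (tb D (B + 1) (x * S y))) ∂μ =
      ((Ring.choose B D * x ^ D : ℝ) : ℂ) * ∫ y, q y * S y ^ D ∂μ := by
  have e : ∀ y, q y * (tb D B (x * S y) * (starRingEnd ℂ) (tb D (B + 1) (x * S y))) =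
      ∑ j ∈ Finset.range (D + 1), ∑ l ∈ Finset.range (D + 1),
        ((Ring.choose B j * x ^ j * (Ring.choose (B + 1) l * x ^ l) : ℝ) : ℂ) *
          (q y * S y ^ j * (starRingEnd ℂ) (S y) ^ l) := by
    intro y
    unfold tb
    rw [map_sum, Finset.sum_mul_sum, Finset.mul_sum]
    refine Finset.sum_congr rfl fun j _ => ?_
    rw [Finset.mul_sum]
    refine Finset.sum_congr rfl fun l _ => ?_
    simp only [map_mul, map_pow, Complex.conj_ofReal]
    push_cast; ring
  simp only [e]
  rw [integral_finsetSum _ (fun j _ => cintX μ _ (by fun_prop))]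
  have e2 : ∀ j, ∫ y, ∑ l ∈ Finset.range (D + 1),
        ((Ring.choose B j * x ^ j * (Ring.choose (B + 1) l * x ^ l) : ℝ) : ℂ) *
          (q y * S y ^ j * (starRingEnd ℂ) (S y) ^ l) ∂μ = ∑ l ∈ Finset.range (D + 1),
        ((Ring.choose B j * x ^ j * (Ring.choose (B + 1) l * x ^ l) : ℝ) : ℂ) *
          ∫ y, (q y * S y ^ j * (starRingEnd ℂ) (S y) ^ l) ∂μ := by
    intro j
    rw [integral_finsetSum _ (fun j _ => cintX μ _ (by fun_prop))]
    simp only [integral_const_mul]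
  simp only [e2]
  rw [Finset.sum_eq_single D, Finset.sum_eq_single 0]
  · simp
  · intro l _ hl
    rw [hmom D l le_rfl (by omega), mul_zero]
  · simp
  · intro j hj hjD
    rw [Finset.mem_range] at hj
    apply Finset.sum_eq_zero
    intro l _
    rw [hmom j l (by omega) (by omega), mul_zero]
  · simp

lemma choose_x (D : ℕ) (B : ℝ) (hB : Ring.choose B D ≠ 0) (S q : C(X, ℂ)) (hq : ∀ y, ‖q y‖ = 1)
    (hmom : ∀ j l, j ≤ D → j ≠ l + D → ∫ y, q y * S y ^ j * (starRingEnd ℂ) (S y) ^ l ∂μ = 0)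
    (hk : (∫ y, q y * S y ^ D ∂μ).re ≠ 0) :
    ∃ x : ℝ, 0 < x ∧ (∀ y, ‖(x : ℂ) * S y‖ ≤ 1 / 2) ∧ (∫ y, q y * Phi B (x * S y) ∂μ).re ≠ 0 := by
  obtain ⟨C, hC, δ, hδ, hT⟩ := taylor3 D B
  set κ := ∫ y, q y * S y ^ D ∂μ with hκ
  set M : ℝ := ‖S‖ + 1 with hM
  have hMpos : 0 < M := by positivity
  have hSM : ∀ y, ‖S y‖ ≤ M := fun y => (S.norm_coe_le_norm y).trans (by linarith)
  set E : ℝ := |Ring.choose B D * κ.re| with hE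
  have hEpos : 0 < E := abs_pos.2 (mul_ne_zero hB hk)
  set K : ℝ := C * M ^ (D + 1) with hK
  have hKpos : 0 < K := by positivity
  obtain ⟨x, hx, hx1, hx2, hx3⟩ : ∃ x : ℝ, 0 < x ∧ x * M ≤ 1 / 2 ∧ x * M ≤ δ ∧ K * x < E := by
    refine ⟨min (min (1 / 2 / M) (δ / M)) (E / K / 2), by positivity, ?_, ?_, ?_⟩
    · rw [← le_div_iff₀ hMpos]; exact (min_le_left _ _).trans (min_le_left _ _)
    · rw [← le_div_iff₀ hMpos]; exact (min_le_left _ _).trans (min_le_right _ _)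
    · rw [mul_comm, ← lt_div_iff₀ hKpos]
      refine (min_le_right _ _).trans_lt ?_
      have : 0 < E / K := by positivity
      linarith
  have hxS : ∀ y, ‖(x : ℂ) * S y‖ ≤ x * M := by
    intro y
    rw [norm_mul, Complex.norm_real, Real.norm_of_nonneg hx.le]
    exact mul_le_mul_of_nonneg_left (hSM y) hx.le
  refine ⟨x, hx, fun y => (hxS y).trans hx1, ?_⟩
  have hcontPhi : Continuous fun y => q y * Phi B (x * S y) := by
    have hne : ∀ y, 1 + (x : ℂ) * S y ∈ Complex.slitPlane := by
      intro y
      apply Complex.mem_slitPlane_of_norm_lt_one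
      exact ((hxS y).trans hx1).trans_lt (by norm_num)
    unfold Phi
    refine q.continuous.mul (Continuous.mul ?_ (Complex.continuous_conj.comp ?_)) <;>
    exact Continuous.cpow (by fun_prop) (by fun_prop) hne
  have hdiff : ‖∫ y, q y * Phi B (x * S y) ∂μ - ((Ring.choose B D * x ^ D : ℝ) : ℂ) * κ‖ ≤ K * x * x ^ D := by
    rw [hκ, ← main_moment μ D B S q hmom x, ← integral_sub (cintX μ _ hcontPhi) (cintX μ _ (by
      have := cont_tb D B
      have := cont_tb D (B + 1)
      fun_prop))]
    have := norm_integral_le_of_norm_le_const (μ := μ) (C := K * x * x ^ D)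
      (f := fun y => q y * Phi B (x * S y) - q y * (tb D B (x * S y) * (starRingEnd ℂ) (tb D (B + 1) (x * S y)))) (Filter.Eventually.of_forall fun y => ?_)
    · simpa using this
    · rw [← mul_sub, norm_mul, hq, one_mul]
      refine (hT _ ((hxS y).trans hx2)).trans ?_
      calc C * ‖(x : ℂ) * S y‖ ^ (D + 1) ≤ C * (x * M) ^ (D + 1) := by
            gcongr; exact hxS y
        _ = K * x * x ^ D := by rw [hK]; ring
  intro h0
  have h1 := (Complex.abs_re_le_norm _).trans hdiff
  rw [Complex.sub_re, h0, Complex.re_ofReal_mul, zero_sub, abs_neg,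
    mul_right_comm, abs_mul, ← hE, abs_of_pos (pow_pos hx D)] at h1
  have := mul_lt_mul_of_pos_right hx3 (pow_pos hx D)
  linarith

lemma exists_eps (P : ℝ) (c q : C(X, ℂ)) (hq : ∀ y, ‖q y‖ = 1) (hc : ∀ y, 1 / 2 ≤ ‖c y‖)
    (hne : ∫ y, (Complex.normSq (c y)) ^ (P / 2 - 1) * ((starRingEnd ℂ) (c y) * q y).re ∂μ ≠ 0)
    (hP : 0 < P) :
    ∃ ε : ℝ, ∫ y, ‖c y + ε * q y‖ ^ P ∂μ < ∫ y, ‖c y‖ ^ P ∂μ := by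
  by_contra! hcon
  set N : ℝ → X → ℝ := fun ε y => Complex.normSq (c y) + 2 * ε * ((starRingEnd ℂ) (c y) * q y).re + ε ^ 2 with hN
  have hNe : ∀ ε y, N ε y = ‖c y + ε * q y‖ ^ 2 := by
    intro ε y
    have h1 : Complex.normSq (q y) = 1 := by rw [Complex.normSq_eq_norm_sq, hq]; simp
    rw [Complex.normSq_apply] at h1
    rw [← Complex.normSq_eq_norm_sq]
    simp only [hN, Complex.normSq_apply, Complex.add_re, Complex.add_im, Complex.mul_re, Complex.mul_im,
      Complex.ofReal_re, Complex.ofReal_im, Complex.conj_re, Complex.conj_im]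
    linear_combination (-ε ^ 2) * h1
  have hpow : ∀ (ε : ℝ) (y : X), ‖c y + ε * q y‖ ^ P = N ε y ^ (P / 2) := by
    intro ε y
    rw [hNe, ← Real.rpow_natCast, ← Real.rpow_mul (norm_nonneg _)]
    congr 1; push_cast; ring
  have hlow : ∀ ε ∈ Metric.ball (0 : ℝ) (1 / 4), ∀ y, 1 / 16 ≤ N ε y := by
    intro ε hε y
    rw [hNe]
    have h1 : ‖(ε : ℂ) * q y‖ ≤ 1 / 4 := by
      rw [norm_mul, hq, mul_one, Complex.norm_real]
      simpa using (Metric.mem_ball.1 hε).le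
    have h2 : ‖c y‖ ≤ ‖c y + ε * q y‖ + ‖(ε : ℂ) * q y‖ := by
      have := norm_sub_le (c y + ε * q y) (ε * q y)
      simpa using this
    have := hc y
    nlinarith
  set F' : ℝ → X → ℝ := fun ε y => (2 * ((starRingEnd ℂ) (c y) * q y).re + 2 * ε) * (P / 2) * N ε y ^ (P / 2 - 1) with hF'
  have hcN : Continuous fun z : ℝ × X => N z.1 z.2 := by simp only [hN]; fun_prop
  have hcNe : ∀ ε, Continuous (N ε) := fun ε => hcN.comp (by fun_prop : Continuous fun y => (ε, y))
  have hbound : ∃ K : ℝ, ∀ ε ∈ Metric.ball (0 : ℝ) (1 / 8), ∀ y, ‖F' ε y‖ ≤ K := by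
    have hcomp : IsCompact (Metric.closedBall (0 : ℝ) (1 / 8) ×ˢ (Set.univ : Set X)) :=
      (isCompact_closedBall _ _).prod isCompact_univ
    have hcon : ContinuousOn (fun z : ℝ × X => F' z.1 z.2) (Metric.closedBall (0 : ℝ) (1 / 8) ×ˢ (Set.univ : Set X)) := by
      simp only [hF']
      refine ContinuousOn.mul (Continuous.continuousOn (by fun_prop)) ?_
      refine ContinuousOn.rpow_const hcN.continuousOn ?_
      rintro ⟨ε, y⟩ ⟨hε, -⟩
      left
      have := hlow ε (Metric.closedBall_subset_ball (by norm_num) hε) y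
      simp only; linarith
    obtain ⟨K, hK⟩ := hcomp.exists_bound_of_continuousOn hcon
    exact ⟨K, fun ε hε y => hK (ε, y) ⟨Metric.ball_subset_closedBall hε, trivial⟩⟩
  obtain ⟨K, hK⟩ := hbound
  have hder := (hasDerivAt_integral_of_dominated_loc_of_deriv_le (μ := μ) (𝕜 := ℝ) (x₀ := (0 : ℝ))
    (F := fun ε y => N ε y ^ (P / 2)) (F' := F') (bound := fun _ => K)
    (s := Metric.ball (0 : ℝ) (1 / 8)) (Metric.ball_mem_nhds _ (by norm_num))
    (Filter.Eventually.of_forall fun ε =>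
      (cintX μ _ ((hcNe ε).rpow_const fun y => Or.inr (by positivity))).aestronglyMeasurable)
    (cintX μ _ ((hcNe 0).rpow_const fun y => Or.inr (by positivity)))
    (by
      refine (cintX μ _ ?_).aestronglyMeasurable
      simp only [hF']
      refine Continuous.mul (by fun_prop) ((hcNe 0).rpow_const fun y => Or.inl ?_)
      have := hlow 0 (Metric.mem_ball_self (by norm_num)) y
      linarith)
    (Filter.Eventually.of_forall fun y ε hε => hK ε hε y)
    (integrable_const _)
    (Filter.Eventually.of_forall fun y ε hε => by
      have hd : HasDerivAt (fun ε => N ε y) (2 * ((starRingEnd ℂ) (c y) * q y).re + 2 * ε) ε := by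
        have h1 := ((hasDerivAt_id ε).const_mul 2).mul_const ((starRingEnd ℂ) (c y) * q y).re
        have h2 := (h1.const_add (Complex.normSq (c y))).add ((hasDerivAt_id ε).pow 2)
        exact h2.congr_deriv (by simp)
      refine hd.rpow_const (Or.inl ?_)
      have := hlow ε (Metric.ball_subset_ball (by norm_num) hε) y
      linarith)).2
  have hmin : IsLocalMin (fun ε : ℝ => ∫ y, N ε y ^ (P / 2) ∂μ) 0 := by
    refine Filter.Eventually.of_forall fun ε => ?_
    have := hcon ε
    simp only [← hpow]
    simpa using this
  have h0 := hmin.hasDerivAt_eq_zero hder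
  apply hne
  have e : ∀ y, F' 0 y = P * ((Complex.normSq (c y)) ^ (P / 2 - 1) * ((starRingEnd ℂ) (c y) * q y).re) := by
    intro y
    simp only [hF', hN]
    ring_nf
  simp only [e] at h0
  rw [integral_const_mul] at h0
  exact (mul_eq_zero.1 h0).resolve_left hP.ne'

lemma finite_p (D : ℕ) (P : ℝ) (hP : 0 < P) (hB : Ring.choose (P / 2 - 1) D ≠ 0) (S q : C(X, ℂ))
    (hq : ∀ y, ‖q y‖ = 1)
    (hmom : ∀ j l, j ≤ D → j ≠ l + D → ∫ y, q y * S y ^ j * (starRingEnd ℂ) (S y) ^ l ∂μ = 0)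
    (hk : (∫ y, q y * S y ^ D ∂μ).re ≠ 0) :
    ∃ x ε : ℝ, ∫ y, ‖1 + x * S y + ε * q y‖ ^ P ∂μ < ∫ y, ‖1 + x * S y‖ ^ P ∂μ := by
  obtain ⟨x, hx, hx1, hx2⟩ := choose_x μ D (P / 2 - 1) hB S q hq hmom hk
  have hc : ∀ y, 1 / 2 ≤ ‖1 + (x : ℂ) * S y‖ := by
    intro y
    have h1 := norm_sub_le (1 + (x : ℂ) * S y) ((x : ℂ) * S y)
    have h2 := hx1 y
    rw [add_sub_cancel_right, norm_one] at h1
    linarith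
  have hne0 : ∀ y, 1 + (x : ℂ) * S y ≠ 0 := fun y h => by
    have := hc y
    rw [h] at this; norm_num at this
  obtain ⟨ε, hε⟩ := exists_eps μ P (1 + (x : ℂ) • S) q hq (by simpa using hc) (by
    intro h
    apply hx2
    have hI : Integrable (fun y => q y * Phi (P / 2 - 1) (x * S y)) μ := by
      refine cintX μ _ ?_
      have e : ∀ y, q y * Phi (P / 2 - 1) (x * S y) = q y * (((Complex.normSq (1 + x * S y) ^ (P / 2 - 1) : ℝ) : ℂ) * (starRingEnd ℂ) (1 + x * S y)) := fun y => by
        rw [Phi_eq _ _ (hne0 y)]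
      simp only [e]
      refine q.continuous.mul (Continuous.mul (Complex.continuous_ofReal.comp ?_) (by fun_prop))
      refine Continuous.rpow_const (Complex.continuous_normSq.comp (by fun_prop)) fun y => Or.inl ?_
      simpa using hne0 y
    have h1 := integral_re hI
    simp only [RCLike.re_to_complex] at h1
    rw [← h1, ← h]
    congr 1
    funext y
    rw [Phi_eq _ _ (hne0 y), mul_left_comm, Complex.re_ofReal_mul]
    simp [mul_comm]) hP
  exact ⟨x, ε, by simpa using hε⟩

end

end

section


/-- block torus -/
abbrev Blk (d : ℕ) := Fin d → AddCircle (1 : ℝ)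

instance : IsProbabilityMeasure (volume : Measure (AddCircle (1 : ℝ))) := ⟨by
  rw [AddCircle.measure_univ]; simp⟩

instance (d : ℕ) : Measure.IsAddHaarMeasure (volume : Measure (Blk d)) := by
  infer_instance
instance (d : ℕ) : IsProbabilityMeasure (volume : Measure (Blk d)) := by
  infer_instance

/-- characters of the block torus -/
def ch {d : ℕ} (m : Fin d → ℤ) : C(Blk d, ℂ) where
  toFun y := ∏ r, fourier (m r) (y r)
  continuous_toFun := by fun_prop

lemma ch_apply {d : ℕ} (m : Fin d → ℤ) (y : Blk d) : ch m y = ∏ r, (fourier (m r) (y r) : ℂ) := rfl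

lemma ch_zero {d : ℕ} : ch (0 : Fin d → ℤ) = 1 := by
  ext y; simp [ch_apply]

lemma ch_add {d : ℕ} (m m' : Fin d → ℤ) : ch (m + m') = ch m * ch m' := by
  ext y; simp [ch_apply, fourier_add, Finset.prod_mul_distrib, -fourier_apply]

lemma ch_sum {d : ℕ} {ι : Type*} (s : Finset ι) (m : ι → Fin d → ℤ) :
    ch (∑ i ∈ s, m i) = ∏ i ∈ s, ch (m i) := by
  classical
  induction s using Finset.induction_on with
  | empty => simp [ch_zero]
  | insert a s ha ih => rw [Finset.sum_insert ha, Finset.prod_insert ha, ch_add, ih]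

lemma ch_trans {d : ℕ} (m : Fin d → ℤ) (y t : Blk d) : ch m (y + t) = ch m y * ch m t := by
  simp only [ch_apply, Pi.add_apply, fourier_add_right, Finset.prod_mul_distrib]

lemma norm_ch {d : ℕ} (m : Fin d → ℤ) (y : Blk d) : ‖ch m y‖ = 1 := by
  simp only [ch_apply, norm_prod, fourier_apply, Circle.norm_coe, Finset.prod_const_one]

lemma ch_pt_zero {d : ℕ} (m : Fin d → ℤ) : ch m 0 = 1 := by
  simp [ch_apply]

lemma ch_pi {d : ℕ} (m : Fin d → ℤ) (j : Fin d) (t : AddCircle (1 : ℝ)) :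
    ch m (Pi.single j t) = fourier (m j) t := by
  rw [ch_apply, Finset.prod_eq_single j]
  · simp
  · intro b _ hb; simp [hb]
  · simp

lemma int_ch {d : ℕ} (m : Fin d → ℤ) : ∫ y, ch m y = if m = 0 then (1 : ℂ) else 0 := by
  split_ifs with h
  · simp [h, ch_zero]
  · obtain ⟨j, hj⟩ : ∃ j, m j ≠ 0 := by
      by_contra! h'; exact h (funext h')
    obtain ⟨t, ht⟩ := exists_fourier_ne (m j) hj
    have h1 := integral_add_right_eq_self (μ := (volume : Measure (Blk d)))
      (fun z => ch m z) (Pi.single j t)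
    simp only [ch_trans, ch_pi, ht] at h1
    rw [integral_mul_const] at h1
    linear_combination (-1 : ℂ) / 2 * h1

/-- frequency differences -/
def pm (n k : ℕ) : Fin (n + 2) → ℤ := fun r => (pat n k r : ℤ) - 1

/-- the sum -/
def SS (n : ℕ) : C(Blk (n + 2), ℂ) := ∑ k : Fin (n + 1), ch (pm n (k + 1))

/-- the excluded character -/
def qq (n : ℕ) : C(Blk (n + 2), ℂ) := ch (pm n (n + 2))

lemma fourier_pow' (m : ℤ) (j : ℕ) (t : AddCircle (1 : ℝ)) :
    (fourier m t : ℂ) ^ j = fourier (j * m) t := by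
  induction j with
  | zero => simp
  | succ j ih => rw [pow_succ, ih, ← fourier_add]; congr 2; push_cast; ring

lemma hmom (n j l : ℕ) (h : j ≠ l + (n + 1)) :
    ∫ y, qq n y * SS n y ^ j * (starRingEnd ℂ) (SS n y) ^ l = 0 := by
  obtain ⟨t, ht⟩ := exists_fourier_ne ((n + 1 : ℤ) - j + l) (by omega)
  have hS : ∀ y, SS n (y + Pi.single 0 t) = fourier (-1) t * SS n y := by
    intro y
    simp only [SS, ContinuousMap.coe_sum, Finset.sum_apply, ch_trans, ch_pi]
    rw [Finset.mul_sum]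
    refine Finset.sum_congr rfl fun k _ => ?_
    have : pm n (k + 1) 0 = -1 := by
      have := k.2
      simp [pm, pat]; omega
    rw [this]; ring
  have hq : ∀ y, qq n (y + Pi.single 0 t) = fourier (n + 1 : ℤ) t * qq n y := by
    intro y
    simp only [qq, ch_trans, ch_pi]
    have : pm n (n + 2) 0 = n + 1 := by
      simp [pm, pat]; ring
    rw [this]; ring
  have h1 := integral_add_right_eq_self (μ := (volume : Measure (Blk (n + 2))))
      (fun y => qq n y * SS n y ^ j * (starRingEnd ℂ) (SS n y) ^ l) (Pi.single 0 t)
  have h2 : ∀ y, qq n (y + Pi.single 0 t) * SS n (y + Pi.single 0 t) ^ j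
      * (starRingEnd ℂ) (SS n (y + Pi.single 0 t)) ^ l =
      (qq n y * SS n y ^ j * (starRingEnd ℂ) (SS n y) ^ l) * (-1) := by
    intro y
    have h3 : (fourier ((n + 1 : ℤ) + (j * (-1)) + l * (-(-1))) t : ℂ) = -1 := by
      rw [← ht]; congr 2; ring
    rw [fourier_add, fourier_add (m := (n + 1 : ℤ))] at h3
    rw [hS, hq, ← h3, map_mul, ← fourier_neg, mul_pow, mul_pow, fourier_pow', fourier_pow']
    ring
  simp only [h2] at h1
  rw [integral_mul_const] at h1
  linear_combination (-1 : ℂ) / 2 * h1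

lemma pm_sum (n : ℕ) : pm n (n + 2) + ∑ k : Fin (n + 1), pm n (k + 1) = 0 := by
  funext r
  simp only [Pi.add_apply, Finset.sum_apply, Pi.zero_apply, pm, Finset.sum_sub_distrib]
  have h : ∀ k : Fin (n + 1), (pat n (k + 1) r : ℤ) = if (r : ℕ) = k + 1 then (n + 2 : ℤ) else 0 := by
    intro k
    have := k.2
    unfold pat
    rw [if_neg (by omega), if_neg (by omega)]
    push_cast
    rfl
  simp only [h]
  clear h
  refine Fin.cases ?_ (fun r => ?_) r
  · simp [pat]
    ring
  · rw [Finset.sum_eq_single r]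
    · simp [pat]
    · intro b _ hb
      rw [if_neg]
      intro h; apply hb; ext; simp at h; omega
    · simp

lemma hk (n : ℕ) : (∫ y, qq n y * SS n y ^ (n + 1)).re ≠ 0 := by
  have hexp : ∀ y, qq n y * SS n y ^ (n + 1) =
      ∑ σ : Fin (n + 1) → Fin (n + 1), ch (pm n (n + 2) + ∑ j, pm n (σ j + 1)) y := by
    intro y
    have : SS n ^ (n + 1) = ∑ σ : Fin (n + 1) → Fin (n + 1), ∏ j, ch (pm n (σ j + 1)) := by
      have := Finset.prod_univ_sum (fun _ : Fin (n + 1) => (Finset.univ : Finset (Fin (n + 1))))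
        (fun _ k => ch (pm n (k + 1)))
      rw [Finset.prod_const, Finset.card_univ, Fintype.card_fin] at this
      rw [SS, this, Fintype.piFinset_univ]
    rw [← ContinuousMap.pow_apply, this]
    simp only [ch_add, ch_sum, qq]
    rw [ContinuousMap.coe_sum, Finset.sum_apply, Finset.mul_sum]
    rfl
  simp only [hexp]
  rw [integral_finsetSum _ (fun σ _ => (ch _).continuous.integrable_of_hasCompactSupport
    (HasCompactSupport.of_compactSpace _))]
  simp only [int_ch]
  rw [Complex.re_sum]
  apply ne_of_gt
  apply Finset.sum_pos'
  · intro σ _; split_ifs <;> simp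
  · exact ⟨id, Finset.mem_univ _, by simp [pm_sum]⟩

lemma choose_ne (n : ℕ) (b : ℝ) (h : ∀ j : ℕ, j < n + 1 → b ≠ j) : Ring.choose b (n + 1) ≠ 0 := by
  intro h0
  have h1 := Ring.descPochhammer_eq_factorial_smul_choose b (n + 1)
  rw [h0, smul_zero] at h1
  have h2 : ∀ m : ℕ, (descPochhammer ℤ m).smeval b = ∏ j ∈ Finset.range m, (b - j) := by
    intro m
    induction m with
    | zero => simp
    | succ m ih =>
      rw [descPochhammer_succ_right, Polynomial.smeval_mul, ih, Finset.prod_range_succ,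
        Polynomial.smeval_sub, Polynomial.smeval_X, Polynomial.smeval_natCast]
      simp
  rw [h2, Finset.prod_eq_zero_iff] at h1
  obtain ⟨j, hj, h3⟩ := h1
  exact h j (Finset.mem_range.1 hj) (sub_eq_zero.1 h3)

lemma block_fin (n : ℕ) (P : ℝ) (hP : 0 < P) (h : ∀ j : ℕ, j < n + 1 → P ≠ 2 * (j + 1)) :
    ∃ x ε : ℝ, ∫ y, ‖1 + x * SS n y + ε * qq n y‖ ^ P < ∫ y, ‖1 + x * SS n y‖ ^ P := by
  refine finite_p volume (n + 1) P hP (choose_ne n _ fun j hj h' => h j hj (by linarith)) _ _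
    (fun y => norm_ch _ y) (fun j l _ h => hmom n j l h) (hk n)


end

section


lemma norm_SS (n : ℕ) (y : Blk (n + 2)) : ‖1 + SS n y‖ ≤ n + 2 := by
  refine (norm_add_le _ _).trans ?_
  have : ‖SS n y‖ ≤ n + 1 := by
    simp only [SS, ContinuousMap.coe_sum, Finset.sum_apply]
    refine (norm_sum_le _ _).trans ?_
    simp [norm_ch]
  rw [norm_one]; linarith

lemma eq_one_of (s : ℂ) (h : ‖s‖ = 1) (h2 : 2 ≤ ‖1 + s‖) : s = 1 := by
  have h3 : ‖1 + s‖ ^ 2 ≥ 4 := by nlinarith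
  have h4 : ‖s‖ ^ 2 = 1 := by rw [h]; norm_num
  rw [Complex.sq_norm, Complex.normSq_apply] at h3 h4
  simp at h3
  have h5 : s.re = 1 := by nlinarith
  have h6 : s.im = 0 := by
    rw [h5] at h4; nlinarith
  exact Complex.ext (by simpa using h5) (by simpa using h6)

lemma norm_SS_eq (n : ℕ) (y : Blk (n + 2)) (h : n + 2 ≤ ‖1 + SS n y‖) :
    SS n y = n + 1 ∧ qq n y = 1 := by
  have h1 : ∀ k : Fin (n + 1), ch (pm n (k + 1)) y = 1 := by
    intro k
    apply eq_one_of _ (norm_ch _ _)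
    simp only [SS, ContinuousMap.coe_sum, Finset.sum_apply] at h
    rw [← Finset.add_sum_erase _ _ (Finset.mem_univ k), ← add_assoc] at h
    have h2 := norm_add_le (1 + ch (pm n (k + 1)) y)
      (∑ x ∈ Finset.univ.erase k, ch (pm n (x + 1)) y)
    have h3 : ‖∑ x ∈ Finset.univ.erase k, ch (pm n (x + 1)) y‖ ≤ n := by
      refine (norm_sum_le _ _).trans ?_
      simp [norm_ch]
    linarith
  constructor
  · simp [SS, ContinuousMap.coe_sum, Finset.sum_apply, h1]
  · have h2 := congrArg (fun m => ch m y) (pm_sum n)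
    simp only [ch_add, ch_sum, ch_zero, ContinuousMap.mul_apply, ContinuousMap.coe_prod,
      Finset.prod_apply, h1, Finset.prod_const_one, mul_one] at h2
    simpa [qq] using h2

lemma block_inf (n : ℕ) : ∃ ε M : ℝ, 0 ≤ M ∧ M < n + 2 ∧
    ∀ y, ‖1 + ((1 : ℝ) : ℂ) * SS n y + ε * qq n y‖ ≤ M := by
  set Z : Set (Blk (n + 2)) := {y | ((starRingEnd ℂ) (1 + SS n y) * qq n y).re ≤ 1} with hZ
  have hZc : IsCompact Z := by
    apply IsClosed.isCompact
    apply isClosed_le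
    · fun_prop
    · fun_prop
  obtain ⟨m, hm0, hm, hmZ⟩ : ∃ m : ℝ, 0 ≤ m ∧ m < n + 2 ∧ ∀ y ∈ Z, ‖1 + SS n y‖ ≤ m := by
    rcases Z.eq_empty_or_nonempty with h | h
    · exact ⟨0, le_rfl, by positivity, by simp [h]⟩
    · obtain ⟨y0, hy0, hmax⟩ := hZc.exists_isMaxOn h
        (f := fun y => ‖1 + SS n y‖) (by fun_prop)
      refine ⟨‖1 + SS n y0‖, norm_nonneg _, ?_, hmax⟩
      by_contra! hc
      obtain ⟨h1, h2⟩ := norm_SS_eq n y0 hc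
      rw [hZ, Set.mem_ofPred_eq, h1, h2] at hy0
      simp at hy0
      have : (0 : ℝ) ≤ n := Nat.cast_nonneg n
      linarith
  set ε : ℝ := min 1 ((n + 2 - m) / 2) with hε
  have hε0 : 0 < ε := lt_min one_pos (by linarith)
  have hε1 : ε ≤ 1 := min_le_left _ _
  have hε2 : ε ≤ (n + 2 - m) / 2 := min_le_right _ _
  have hn0 : (0 : ℝ) ≤ n := Nat.cast_nonneg n
  refine ⟨-ε, max (m + ε) (Real.sqrt ((n + 2) ^ 2 - ε)), le_max_of_le_left (by linarith),
    max_lt (by linarith) ?_, fun y => ?_⟩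
  · rw [Real.sqrt_lt' (by linarith)]; linarith
  · have hq : ‖qq n y‖ = 1 := norm_ch _ _
    rw [Complex.ofReal_one, one_mul, Complex.ofReal_neg, neg_mul, ← sub_eq_add_neg]
    by_cases hy : y ∈ Z
    · apply le_max_of_le_left
      refine (norm_sub_le _ _).trans ?_
      rw [norm_mul, hq, Complex.norm_real, Real.norm_of_nonneg hε0.le]
      linarith [hmZ y hy]
    · apply le_max_of_le_right
      apply Real.le_sqrt_of_sq_le
      rw [hZ, Set.mem_ofPred_eq, not_le] at hy
      have h1 := norm_SS n y
      have h2 : ‖1 + SS n y‖ ^ 2 ≤ (n + 2) ^ 2 := pow_le_pow_left₀ (norm_nonneg _) h1 2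
      have h4 : ‖qq n y‖ ^ 2 = 1 := by rw [hq]; norm_num
      generalize 1 + SS n y = g at *
      generalize qq n y = q at *
      rw [Complex.sq_norm, Complex.normSq_apply] at *
      simp at h2 h4 hy ⊢
      have h5 : (g.re - ε * q.re) * (g.re - ε * q.re) + (g.im - ε * q.im) * (g.im - ε * q.im) =
        (g.re * g.re + g.im * g.im) - 2 * (ε * (g.re * q.re + g.im * q.im))
          + ε * ε * (q.re * q.re + q.im * q.im) := by ring
      have h6 : ε * 1 ≤ ε * (g.re * q.re + g.im * q.im) := mul_le_mul_of_nonneg_left hy.le hε0.le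
      have h7 : ε * ε ≤ ε * 1 := mul_le_mul_of_nonneg_left hε1 hε0.le
      rw [h5, h4]
      linarith


end

section


/-- coefficients of the block polynomial -/
def co (n : ℕ) (x ε : ℝ) (k : ℕ) : ℂ := if k = 0 then 1 else if k = n + 2 then ε else x

/-- block polynomial -/
def f0 (n : ℕ) (x ε : ℝ) : C(Blk (n + 2), ℂ) :=
  ∑ k : Fin (n + 3), co n x ε k • ch (fun r => (pat n k r : ℤ))

lemma ch_pat (n k : ℕ) : ch (fun r : Fin (n + 2) => (pat n k r : ℤ)) =
    ch (fun r : Fin (n + 2) => (pat n 0 r : ℤ)) * ch (pm n k) := by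
  rw [← ch_add]
  congr 1
  funext r
  simp [pm, pat]

lemma f0_eq (n : ℕ) (x ε : ℝ) (y : Blk (n + 2)) :
    f0 n x ε y = ch (fun r : Fin (n + 2) => (pat n 0 r : ℤ)) y *
      (1 + x * SS n y + ε * qq n y) := by
  simp only [f0, ContinuousMap.coe_sum, Finset.sum_apply, ContinuousMap.smul_apply, smul_eq_mul]
  rw [Fin.sum_univ_castSucc, Fin.sum_univ_succ]
  simp only [ch_pat n (Fin.val _), ContinuousMap.mul_apply]
  have h0 : pm n 0 = 0 := by funext r; simp [pm, pat]
  have h1 : ∀ k : Fin (n + 1), co n x ε (k + 1) = x := by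
    intro k
    have := k.2
    unfold co
    rw [if_neg (by omega), if_neg (by omega)]
  have h2 : co n x ε (n + 2) = ε := by simp [co]
  have h3 : co n x ε 0 = 1 := by simp [co]
  simp only [Fin.val_castSucc, Fin.val_succ, Fin.val_last, Fin.val_zero, h0, h1, h2, h3, ch_zero,
    SS, qq, ContinuousMap.coe_sum, Finset.sum_apply, ContinuousMap.one_apply]
  rw [mul_add, mul_add, Finset.mul_sum, Finset.mul_sum]
  simp only [mul_left_comm, one_mul, mul_one]

lemma norm_f0 (n : ℕ) (x ε : ℝ) (y : Blk (n + 2)) :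
    ‖f0 n x ε y‖ = ‖1 + x * SS n y + ε * qq n y‖ := by
  rw [f0_eq, norm_mul, norm_ch, one_mul]

/-- extension of a choice function -/
def ext {n N : ℕ} (l : Fin N → Fin (n + 3)) : ℕ → ℕ := fun i => if h : i < N then l ⟨i, h⟩ else 0

lemma ext_val {n N : ℕ} (l : Fin N → Fin (n + 3)) (i : Fin N) : ext l i = l i := by
  simp [ext]

/-- the test polynomials -/
def cN (n N : ℕ) (x ε : ℝ) : (ℕ →₀ ℕ) →₀ ℂ :=
  ∑ l : Fin N → Fin (n + 3), Finsupp.single (vec n N (ext l)) (∏ i, co n x ε (l i))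

/-- restriction to the blocks -/
def psi (n N : ℕ) : TorusInf →+ (Fin N → Blk (n + 2)) where
  toFun z := fun i r => z (idx N i r)
  map_zero' := rfl
  map_add' _ _ := rfl

lemma chi_vec (n N : ℕ) (l : Fin N → Fin (n + 3)) (z : TorusInf) :
    chi (vec n N (ext l)) z = ∏ i, ch (fun r => (pat n (l i) r : ℤ)) (psi n N z i) := by
  simp only [vec, chi_sum, ContinuousMap.coe_prod, Finset.prod_apply, chi_single]
  rw [Finset.prod_range]
  refine Finset.prod_congr rfl fun i _ => ?_
  rw [Finset.prod_range]
  simp only [ext_val]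
  rfl

lemma ev_cN (n N : ℕ) (x ε : ℝ) (z : TorusInf) :
    ev (cN n N x ε) z = ∏ i, f0 n x ε (psi n N z i) := by
  rw [ev_lin, cN, map_sum]
  simp only [Finsupp.linearCombination_single, ContinuousMap.coe_sum, Finset.sum_apply,
    ContinuousMap.smul_apply, smul_eq_mul, chi_vec, f0]
  rw [Finset.prod_univ_sum, Fintype.piFinset_univ]
  simp only [Finset.prod_mul_distrib]

lemma opT_cN (n N : ℕ) (hN : 1 ≤ N) (x ε : ℝ) : opT n (cN n N x ε) = cN n N x 0 := by
  classical
  rw [cN, cN, map_sum]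
  refine Finset.sum_congr rfl fun l _ => ?_
  simp only [opT, LinearMap.coe_mk, AddHom.coe_mk]
  by_cases h : ∃ i, (l i : ℕ) = n + 2
  · obtain ⟨i, hi⟩ := h
    rw [Finsupp.filter_single_of_neg, Finset.prod_eq_zero (Finset.mem_univ i), Finsupp.single_zero]
    · simp [co, hi]
    · rintro ⟨M, hM, l', hl', he⟩
      have h1 := vec_apply n N (ext l) N i 0
      rw [he, vec_apply, ext_val, hi] at h1
      have h2 := hl' i
      simp [pat] at h1
      split_ifs at h1 <;> omega
  · push Not at h
    rw [Finsupp.filter_single_of_pos]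
    · congr 1
      refine Finset.prod_congr rfl fun i _ => ?_
      simp [co, h i]
    · refine ⟨N, hN, ext l, fun i => ?_, rfl⟩
      unfold ext
      split_ifs with hi
      · have := h ⟨i, hi⟩
        have := (l ⟨i, hi⟩).2
        omega
      · omega

lemma psi_mp (n N : ℕ) : MeasurePreserving (psi n N) haarTorusInf volume := by
  have i1 : BorelSpace (Blk (n + 2)) := inferInstance
  have i2 : SecondCountableTopology (Blk (n + 2)) := inferInstance
  have i3 : BorelSpace (Fin N → Blk (n + 2)) := Pi.borelSpace
  have i4 : Measure.IsAddHaarMeasure (volume : Measure (Fin N → Blk (n + 2))) :=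
    Measure.pi.isAddHaarMeasure (fun _ : Fin N => (volume : Measure (Blk (n + 2))))
  refine AddMonoidHom.measurePreserving (f := psi n N) ?_ ?_ ?_
  · show Continuous fun (z : TorusInf) (i : Fin N) (r : Fin (n + 2)) => z (idx N i r)
    fun_prop
  · intro w
    refine ⟨fun j => if h : j.unpair.2.unpair.1 < N ∧ j.unpair.2.unpair.2 < n + 2 then
      w ⟨_, h.1⟩ ⟨_, h.2⟩ else 0, ?_⟩
    funext i r
    simp [psi, idx]
  · simp

lemma int_cN (n N : ℕ) (x ε P : ℝ) (hP : 0 ≤ P) :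
    ∫ z, ‖ev (cN n N x ε) z‖ ^ P ∂haarTorusInf = (∫ y, ‖f0 n x ε y‖ ^ P) ^ N := by
  have h1 : ∀ z, ‖ev (cN n N x ε) z‖ ^ P =
      (fun w : Fin N → Blk (n + 2) => ∏ i, ‖f0 n x ε (w i)‖ ^ P) (psi n N z) := by
    intro z
    rw [ev_cN, norm_prod]
    exact (Real.finsetProd_rpow _ _ (fun i _ => norm_nonneg _) _).symm
  have hc : Continuous (fun w : Fin N → Blk (n + 2) => ∏ i, ‖f0 n x ε (w i)‖ ^ P) := by
    refine continuous_finsetProd _ fun i _ => ?_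
    refine Continuous.rpow_const ?_ fun _ => Or.inr hP
    fun_prop
  have hmp := psi_mp n N
  simp only [h1]
  rw [← integral_map hmp.measurable.aemeasurable hc.aestronglyMeasurable, hmp.map_eq]
  have := integral_fintype_prod_volume_eq_pow (ι := Fin N) (fun y => ‖f0 n x ε y‖ ^ P)
  rw [Fintype.card_fin] at this
  exact this


end

section


lemma exists_pow (A B K : ℝ) (hA : 0 ≤ A) (hAB : A < B) : ∃ N : ℕ, 1 ≤ N ∧ K * A ^ N < B ^ N := by
  rcases hA.eq_or_lt with h | h
  · exact ⟨1, le_rfl, by rw [← h] at hAB ⊢; simpa using hAB⟩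
  · have h1 : 1 < B / A := by rwa [one_lt_div h]
    obtain ⟨N, hN⟩ := pow_unbounded_of_one_lt K h1
    refine ⟨N + 1, by omega, ?_⟩
    have h2 : K < (B / A) ^ (N + 1) := hN.trans_le (pow_le_pow_right₀ h1.le (by omega))
    rwa [div_pow, lt_div_iff₀ (by positivity)] at h2

lemma eLp_pow (p : ℝ≥0∞) (hp : 1 ≤ p) (hpt : p ≠ ∞) (f : C(TorusInf, ℂ)) :
    eLpNorm f p haarTorusInf ^ p.toReal = ENNReal.ofReal (∫ z, ‖f z‖ ^ p.toReal ∂haarTorusInf) := by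
  have hp0 : p ≠ 0 := (zero_lt_one.trans_le hp).ne'
  have hP : 0 < p.toReal := ENNReal.toReal_pos hp0 hpt
  have hcont : Continuous fun z => ‖f z‖ ^ p.toReal :=
    Continuous.rpow_const (by fun_prop) fun _ => Or.inr hP.le
  rw [eLpNorm_eq_lintegral_rpow_enorm_toReal hp0 hpt, ← ENNReal.rpow_mul, one_div,
    inv_mul_cancel₀ hP.ne', ENNReal.rpow_one, ofReal_integral_eq_lintegral_ofReal
      (hcont.integrable_of_hasCompactSupport (HasCompactSupport.of_compactSpace _))
      (Filter.Eventually.of_forall fun z => by positivity)]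
  congr 1
  funext z
  rw [← ENNReal.ofReal_rpow_of_nonneg (norm_nonneg _) hP.le, ofReal_norm]

lemma lower_fin (n : ℕ) (p : ℝ≥0∞) (hp : 1 ≤ p) (hpt : p ≠ ∞) (C : ℝ≥0)
    (hC : ∀ c, eLpNorm (evalAPoly (opT n c)) p haarTorusInf ≤
      C * eLpNorm (evalAPoly c) p haarTorusInf) :
    ∃ j : ℕ, j < n + 1 ∧ p.toReal = 2 * (j + 1) := by
  by_contra! hne
  have hp0 : p ≠ 0 := (zero_lt_one.trans_le hp).ne'
  have hP : 0 < p.toReal := ENNReal.toReal_pos hp0 hpt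
  obtain ⟨x, ε, hlt⟩ := block_fin n p.toReal hP hne
  have e1 : ∫ y, ‖f0 n x ε y‖ ^ p.toReal < ∫ y, ‖f0 n x 0 y‖ ^ p.toReal := by
    simpa only [norm_f0, Complex.ofReal_zero, zero_mul, add_zero] using hlt
  set A := ∫ y, ‖f0 n x ε y‖ ^ p.toReal
  set B := ∫ y, ‖f0 n x 0 y‖ ^ p.toReal
  have hA : 0 ≤ A := integral_nonneg fun y => by positivity
  obtain ⟨N, hN, hKN⟩ := exists_pow A B ((C : ℝ) ^ p.toReal) hA e1
  have h1 := hC (cN n N x ε)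
  rw [opT_cN n N hN, evalAPoly_eq, evalAPoly_eq] at h1
  have h2 := ENNReal.rpow_le_rpow h1 hP.le
  rw [ENNReal.mul_rpow_of_nonneg _ _ hP.le, eLp_pow p hp hpt, eLp_pow p hp hpt,
    int_cN _ _ _ _ _ hP.le, int_cN _ _ _ _ _ hP.le, ← ENNReal.ofReal_coe_nnreal,
    ENNReal.ofReal_rpow_of_nonneg C.coe_nonneg hP.le, ← ENNReal.ofReal_mul (by positivity)] at h2
  rw [ENNReal.ofReal_le_ofReal_iff (by positivity)] at h2
  exact absurd h2 (not_le.2 hKN)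

lemma le_eLp_top (f : C(TorusInf, ℂ)) (z : TorusInf) :
    ENNReal.ofReal ‖f z‖ ≤ eLpNorm f ∞ haarTorusInf := by
  rw [eLpNorm_exponent_top, ofReal_norm]
  have h := ae_le_eLpNormEssSup (f := f) (μ := haarTorusInf)
  have hcl : IsClosed {y | ‖f y‖ₑ ≤ eLpNormEssSup f haarTorusInf} :=
    isClosed_le (by fun_prop) continuous_const
  have h2 := (hcl.ae_eq_univ_iff_eq (μ := haarTorusInf)).1 (by
    rw [ae_eq_univ]; exact h)
  have : z ∈ {y | ‖f y‖ₑ ≤ eLpNormEssSup f haarTorusInf} := by rw [h2]; trivial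
  exact this

lemma lower_top (n : ℕ) (C : ℝ≥0)
    (hC : ∀ c, eLpNorm (evalAPoly (opT n c)) ∞ haarTorusInf ≤
      C * eLpNorm (evalAPoly c) ∞ haarTorusInf) : False := by
  obtain ⟨ε, M, hM0, hM, hb⟩ := block_inf n
  obtain ⟨N, hN, hKN⟩ := exists_pow M (n + 2) C hM0 hM
  have h1 := hC (cN n N 1 ε)
  rw [opT_cN n N hN, evalAPoly_eq, evalAPoly_eq] at h1
  have h2 : eLpNorm (ev (cN n N 1 ε)) ∞ haarTorusInf ≤ ENNReal.ofReal (M ^ N) := by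
    have := eLpNorm_le_of_ae_bound (p := ∞) (μ := haarTorusInf) (f := ev (cN n N 1 ε)) (C := M ^ N)
      (Filter.Eventually.of_forall fun z => by
        rw [ev_cN, norm_prod]
        refine (Finset.prod_le_prod (fun _ _ => norm_nonneg _) (g := fun _ => M) fun i _ => ?_).trans ?_
        · rw [norm_f0]; exact hb _
        · simp)
    simpa using this
  have h3 := le_eLp_top (ev (cN n N 1 0)) 0
  have h4 : ‖ev (cN n N 1 0) 0‖ = (n + 2) ^ N := by
    rw [ev_cN, norm_prod]
    have : ∀ i, ‖f0 n 1 0 (psi n N 0 i)‖ = n + 2 := by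
      intro i
      rw [norm_f0, map_zero, Pi.zero_apply]
      simp only [SS, ContinuousMap.coe_sum, Finset.sum_apply, ch_pt_zero]
      simp
      rw [show (1 + (n + 1) : ℂ) = ((n + 2 : ℕ) : ℂ) by push_cast; ring, Complex.norm_natCast]
      push_cast; rfl
    simp only [this, Finset.prod_const, Finset.card_univ, Fintype.card_fin]
  rw [h4] at h3
  have h5 := h3.trans (h1.trans (mul_le_mul_right h2 _))
  rw [← ENNReal.ofReal_coe_nnreal, ← ENNReal.ofReal_mul (by positivity),
    ENNReal.ofReal_le_ofReal_iff (by positivity)] at h5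
  exact absurd h5 (not_le.2 hKN)


end

end EvenOp

/-- Theorem 4: there is a linear operator on analytic polynomials on `𝕋^∞` which is
bounded in the `L^p(𝕋^∞)` norm exactly for `p = 2, 4, …, 2(n+1)`. -/
theorem exists_operator_bounded_iff_even (n : ℕ) (hn : 1 ≤ n) :
    ∃ T : ((ℕ →₀ ℕ) →₀ ℂ) →ₗ[ℂ] ((ℕ →₀ ℕ) →₀ ℂ),
      ∀ p : ℝ≥0∞, 1 ≤ p →
        ((∃ C : ℝ≥0, ∀ c : (ℕ →₀ ℕ) →₀ ℂ,
            eLpNorm (evalAPoly (T c)) p haarTorusInf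
              ≤ C * eLpNorm (evalAPoly c) p haarTorusInf)
          ↔ ∃ m : ℕ, 1 ≤ m ∧ m ≤ n + 1 ∧ p = 2 * m) := by
  refine ⟨EvenOp.opT n, fun p hp => ⟨?_, ?_⟩⟩
  · rintro ⟨C, hC⟩
    by_cases hpt : p = ∞
    · subst hpt
      exact (EvenOp.lower_top n C hC).elim
    · obtain ⟨j, hj, hpj⟩ := EvenOp.lower_fin n p hp hpt C hC
      refine ⟨j + 1, by omega, by omega, ?_⟩
      rw [← ENNReal.toReal_eq_toReal_iff' hpt (ENNReal.mul_ne_top (by simp) (by simp)), hpj,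
        ENNReal.toReal_mul, ENNReal.toReal_natCast]
      simp
  · rintro ⟨m, hm1, hm2, rfl⟩
    obtain ⟨k, rfl⟩ : ∃ k, m = k + 1 := ⟨m - 1, by omega⟩
    refine ⟨1, fun c => ?_⟩
    rw [ENNReal.coe_one, one_mul]
    exact EvenOp.upper n k (by omega) c

end
end
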